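/- Let A be a cyclic cellular algebra over an integral domain R. Then the wreath product algebra A ≀ 𝔖_n = A^{⊗n} ⋊ 𝔖_n is cyclic cellular, with poset (Λ_n^Γ, ⊵_Γ) of Γ-multipartitions of n ordered by Γ-dominance, and with cellular basis the elements m^λ_{(s,v),(t,w)} = d(s) v y^α x_λ w* d(t)*, where λ ∈ Λ_n^Γ, α = α(λ), s, t are standard λ-tableaux, v, w ∈ V^α, y^α is the tensor product of the elements y_γ in the pattern prescribed by α, and x_λ = Σ_{w ∈ 𝔖_λ} w. -/

import Mathlib

open scoped TensorProduct

/-- A cell datum (Graham–Lehrer cellular basis, in the weak form of Definition 2.1):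
an `R`-linear algebra involution `star`, a poset `Γ`, finite index sets `T γ`, and a basis
`c γ s t` satisfying the cellular multiplication rule (modulo the span `Ā^γ` of the basis
elements `c μ u w` with `μ > γ`) and the cellular involution rule. -/
structure CellDatum (R : Type*) [CommRing R] (A : Type*) [Ring A] [Algebra R A]
    (Γ : Type*) [PartialOrder Γ] (T : Γ → Type*) [∀ γ, Fintype (T γ)] where
  star : A →ₗ[R] A
  star_mul : ∀ a b : A, star (a * b) = star b * star a
  star_star : ∀ a : A, star (star a) = a
  c : (γ : Γ) → T γ → T γ → A
  indep : LinearIndependent R fun p : Σ γ : Γ, T γ × T γ => c p.1 p.2.1 p.2.2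
  span_top : Submodule.span R (Set.range fun p : Σ γ : Γ, T γ × T γ => c p.1 p.2.1 p.2.2) = ⊤
  mult : ∀ (γ : Γ) (s : T γ) (a : A), ∃ r : T γ → R, ∀ t : T γ,
    a * c γ s t - ∑ v : T γ, r v • c γ v t ∈
      Submodule.span R {x : A | ∃ μ : Γ, γ < μ ∧ ∃ u w : T μ, x = c μ u w}
  star_c : ∀ (γ : Γ) (s t : T γ),
    star (c γ s t) - c γ t s ∈
      Submodule.span R {x : A | ∃ μ : Γ, γ < μ ∧ ∃ u w : T μ, x = c μ u w}

namespace CellDatum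

variable {R : Type*} [CommRing R] {A : Type*} [Ring A] [Algebra R A]
  {Γ : Type*} [PartialOrder Γ] {T : Γ → Type*} [∀ γ, Fintype (T γ)]

/-- The ideal `Ā^γ`, spanned by the basis elements `c μ u w` with `μ > γ`. -/
def Abar (D : CellDatum R A Γ T) (γ : Γ) : Submodule R A :=
  Submodule.span R {x : A | ∃ μ : Γ, γ < μ ∧ ∃ u w : T μ, x = D.c μ u w}

/-- The ideal `A^γ`, spanned by the basis elements `c μ u w` with `μ ≥ γ`. -/
def Aup (D : CellDatum R A Γ T) (γ : Γ) : Submodule R A :=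
  Submodule.span R {x : A | ∃ μ : Γ, γ ≤ μ ∧ ∃ u w : T μ, x = D.c μ u w}

end CellDatum

/-- `e : T γ → M` exhibits the `A`-module `M` as (a copy of) the cell module `Δ^γ`:
`e` is an `R`-basis of `M`, and `A` acts on it by the structure coefficients of the cellular
basis. -/
def IsCellModule {R : Type*} [CommRing R] {A : Type*} [Ring A] [Algebra R A]
    {Γ : Type*} [PartialOrder Γ] {T : Γ → Type*} [∀ γ, Fintype (T γ)]
    (D : CellDatum R A Γ T) (γ : Γ) (M : Type*) [AddCommGroup M] [Module R M]
    [Module A M] [IsScalarTower R A M] (e : T γ → M) : Prop :=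
  LinearIndependent R e ∧ Submodule.span R (Set.range e) = ⊤ ∧
    ∀ (a : A) (s : T γ) (r : T γ → R),
      (∀ t : T γ, a * D.c γ s t - ∑ v : T γ, r v • D.c γ v t ∈ D.Abar γ) →
      a • e s = ∑ v : T γ, r v • e v

open scoped Classical

/-- The cells of a multipartition `lam = (λ⁽¹⁾, …, λ⁽ʳ⁾)` (partitions as Young diagrams). -/
def MCells {r : ℕ} (lam : Fin r → YoungDiagram) : Type :=
  (k : Fin r) × {c : ℕ × ℕ // c ∈ (lam k).cells}

noncomputable instance {r : ℕ} (lam : Fin r → YoungDiagram) : Fintype (MCells lam) := by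
  unfold MCells; infer_instance

/-- A `λ`-tableau (a bijective filling of the cells of `λ` with `0, …, n-1`) is
*superstandard* (`t^λ`) if its entries increase in the lexicographic order on
(component, row, column). -/
def IsSuperstandard {r n : ℕ} {lam : Fin r → YoungDiagram}
    (tl : MCells lam ≃ Fin n) : Prop :=
  ∀ x y : MCells lam, tl x ≤ tl y ↔
    (x.1 < y.1 ∨ (x.1 = y.1 ∧ ((x.2 : ℕ × ℕ).1 < (y.2 : ℕ × ℕ).1 ∨
      ((x.2 : ℕ × ℕ).1 = (y.2 : ℕ × ℕ).1 ∧ (x.2 : ℕ × ℕ).2 ≤ (y.2 : ℕ × ℕ).2))))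

/-- A `λ`-tableau is *standard* if within each component its entries increase along rows and
columns. -/
def IsStdTableau {r n : ℕ} {lam : Fin r → YoungDiagram}
    (S : MCells lam ≃ Fin n) : Prop :=
  ∀ x y : MCells lam, x.1 = y.1 → (x.2 : ℕ × ℕ).1 ≤ (y.2 : ℕ × ℕ).1 →
    (x.2 : ℕ × ℕ).2 ≤ (y.2 : ℕ × ℕ).2 → x ≠ y → S x < S y

/-- A `λ`-tableau is *row standard* if within each component its entries increase along
rows. -/
def IsRowStdTableau {r n : ℕ} {lam : Fin r → YoungDiagram}
    (S : MCells lam ≃ Fin n) : Prop :=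
  ∀ x y : MCells lam, x.1 = y.1 → (x.2 : ℕ × ℕ).1 = (y.2 : ℕ × ℕ).1 →
    (x.2 : ℕ × ℕ).2 ≤ (y.2 : ℕ × ℕ).2 → S x ≤ S y

/-- The permutation `d(S)` with `S = d(S) · t^λ`. -/
def dperm {r n : ℕ} {lam : Fin r → YoungDiagram}
    (tl S : MCells lam ≃ Fin n) : Equiv.Perm (Fin n) :=
  tl.symm.trans S

/-- The Young subgroup `𝔖_λ`: the row stabilizer of the tableau `t^λ`. -/
noncomputable def rowStab {r n : ℕ} {lam : Fin r → YoungDiagram}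
    (tl : MCells lam ≃ Fin n) : Finset (Equiv.Perm (Fin n)) :=
  Finset.univ.filter fun σ => ∀ x : MCells lam,
    (tl.symm (σ (tl x))).1 = x.1 ∧
      ((tl.symm (σ (tl x))).2 : ℕ × ℕ).1 = ((x.2 : ℕ × ℕ)).1

/-- Dominance order on multipartitions relative to a listing `l` of the poset `Γ`
(`Γ`-dominance). -/
def GDomL {Γ : Type*} [PartialOrder Γ] {r : ℕ} (l : Fin r → Γ)
    (lam mu : Fin r → YoungDiagram) : Prop :=
  ∀ (k : Fin r) (j : ℕ),
    ((∑ k' ∈ Finset.univ.filter (fun k' => l k < l k'), (mu k').card)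
        + ∑ i ∈ Finset.range j, (mu k).rowLen i)
      ≤ (∑ k' ∈ Finset.univ.filter (fun k' => l k < l k'), (lam k').card)
        + ∑ i ∈ Finset.range j, (lam k).rowLen i

section Wreath

variable {R : Type*} [CommRing R] {A : Type*} [Ring A] [Algebra R A]
  {n : ℕ} {W : Type*} [Ring W] [Algebra R W]

/-- The element `(a₁ ⊗ ⋯ ⊗ aₙ) π` of the wreath product `A ≀ 𝔖_n`, realized inside the
`R`-algebra `W` via the linear isomorphism `φ` with `A^{⊗n} ⊗ R[𝔖_n]`. -/
noncomputable def wm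
    (φ : ((⨂[R] _ : Fin n, A) ⊗[R] (Equiv.Perm (Fin n) →₀ R)) ≃ₗ[R] W)
    (a : Fin n → A) (π : Equiv.Perm (Fin n)) : W :=
  φ ((PiTensorProduct.tprod R a) ⊗ₜ[R] Finsupp.single π (1 : R))

variable (φ : ((⨂[R] _ : Fin n, A) ⊗[R] (Equiv.Perm (Fin n) →₀ R)) ≃ₗ[R] W)

/-- The image in `W` of a permutation `π ∈ 𝔖_n`. -/
noncomputable def sElt (π : Equiv.Perm (Fin n)) : W := wm φ (fun _ => 1) π

/-- The element `y^α = y_{γ(α)₁} ⊗ ⋯ ⊗ y_{γ(α)ₙ}` of `A^{⊗n} ⊂ A ≀ 𝔖_n`, the tensor factor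
at position `i` being indexed by the component of `i` in `t^λ`. -/
noncomputable def yaElt {Γ : Type*} {r : ℕ} {lam : Fin r → YoungDiagram}
    (y : Γ → A) (l : Fin r → Γ) (tl : MCells lam ≃ Fin n) : W :=
  wm φ (fun i => y (l (tl.symm i).1)) 1

/-- An element `v ∈ V^α ⊂ A^{⊗n}`, given by a labelling `τ` of the cells of `λ` by elements
of the corresponding index sets. -/
noncomputable def vElt {Γ : Type*} {T : Γ → Type*} {r : ℕ} {lam : Fin r → YoungDiagram}
    (vv : (γ : Γ) → T γ → A) (l : Fin r → Γ) (tl : MCells lam ≃ Fin n)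
    (τ : ∀ x : MCells lam, T (l x.1)) : W :=
  wm φ (fun i => vv (l (tl.symm i).1) (τ (tl.symm i))) 1

/-- The element `x_λ = ∑_{σ ∈ 𝔖_λ} σ`. -/
noncomputable def xlamElt {r : ℕ} {lam : Fin r → YoungDiagram}
    (tl : MCells lam ≃ Fin n) : W :=
  ∑ σ ∈ rowStab tl, sElt φ σ

end Wreath

/-- The Murphy-type element `m^μ_{(U,τ),(U',τ')} = d(U) v_τ y^α x_μ v_{τ'}* d(U')*` of the
wreath product, relative to a superstandard tableau `tm` of `μ`. -/
noncomputable def mwElt {R : Type*} [CommRing R] {A : Type*} [Ring A] [Algebra R A]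
    {n : ℕ} {W : Type*} [Ring W] [Algebra R W]
    (φ : ((⨂[R] _ : Fin n, A) ⊗[R] (Equiv.Perm (Fin n) →₀ R)) ≃ₗ[R] W)
    (starW : W →ₗ[R] W) {Γ : Type*} {T : Γ → Type*} {r : ℕ}
    (y : Γ → A) (vv : (γ : Γ) → T γ → A) (l : Fin r → Γ)
    {mu : Fin r → YoungDiagram} (tm : MCells mu ≃ Fin n)
    (U U' : MCells mu ≃ Fin n) (τ τ' : ∀ x : MCells mu, T (l x.1)) : W :=
  sElt φ (dperm tm U) * vElt φ vv l tm τ * yaElt φ y l tm * xlamElt φ tm *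
    starW (vElt φ vv l tm τ') * starW (sElt φ (dperm tm U'))

/-- Multipartitions of total size `n` with `r` components. -/
def MPar (r n : ℕ) : Type := {lam : Fin r → YoungDiagram // ∑ k, (lam k).card = n}

/-- The index set `T(λ)` for the cellular basis of the wreath product: pairs `(s, v)` with
`s` a standard `λ`-tableau and `v ∈ V^{α(λ)}` (encoded by a labelling of the cells). -/
def TabIdx {Γ : Type*} (T : Γ → Type*) {r : ℕ} (l : Fin r → Γ) (n : ℕ)
    (lam : Fin r → YoungDiagram) : Type _ :=
  {S : MCells lam ≃ Fin n // IsStdTableau S} × (∀ x : MCells lam, T (l x.1))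

noncomputable instance {Γ : Type*} (T : Γ → Type*) [∀ γ, Fintype (T γ)] {r : ℕ}
    (l : Fin r → Γ) (n : ℕ) (lam : Fin r → YoungDiagram) :
    Fintype (TabIdx T l n lam) := by
  unfold TabIdx; infer_instance

/-! ### Counting linear extensions of multipartitions -/

namespace MultiYoung

/-- The poset of boxes: `r` disjoint copies of `ℕ × ℕ`. -/
abbrev Box (r : ℕ) : Type := Σ _ : Fin r, ℕ × ℕ

variable {r : ℕ}

lemma Box.le_iff {x y : Box r} :
    x ≤ y ↔ x.1 = y.1 ∧ x.2.1 ≤ y.2.1 ∧ x.2.2 ≤ y.2.2 := by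
  obtain ⟨k, a⟩ := x
  obtain ⟨k', b⟩ := y
  constructor
  · intro h
    obtain ⟨h, h'⟩ := Sigma.le_def.1 h
    dsimp at h h'
    subst h
    exact ⟨rfl, h'⟩
  · rintro ⟨h, h'⟩
    dsimp at h h'
    subst h
    exact Sigma.le_def.2 ⟨rfl, h'⟩

lemma mem_of_isLowerSet {S : Set (Box r)} (hs : IsLowerSet S) {k : Fin r} {i j i' j' : ℕ}
    (hx : (⟨k, i, j⟩ : Box r) ∈ S) (hi : i' ≤ i) (hj : j' ≤ j) : (⟨k, i', j'⟩ : Box r) ∈ S :=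
  hs (Box.le_iff.2 ⟨rfl, hi, hj⟩ : (⟨k, i', j'⟩ : Box r) ≤ ⟨k, i, j⟩) hx

/-- The finite set of boxes with both coordinates less than `N`. -/
def bigBox (r N : ℕ) : Finset (Box r) :=
  Finset.univ.sigma fun _ => Finset.range N ×ˢ Finset.range N

lemma mem_bigBox {N : ℕ} {x : Box r} : x ∈ bigBox r N ↔ x.2.1 < N ∧ x.2.2 < N := by
  simp [bigBox]

lemma coord_lt_card {s : Finset (Box r)} (hs : IsLowerSet (s : Set (Box r))) {x : Box r}
    (hx : x ∈ s) : x.2.1 < s.card ∧ x.2.2 < s.card := by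
  obtain ⟨k, i, j⟩ := x
  constructor
  · have : (Finset.range (i + 1)).card ≤ s.card := by
      refine Finset.card_le_card_of_injOn (fun a => (⟨k, a, j⟩ : Box r)) ?_ ?_
      · intro a ha
        exact mem_of_isLowerSet hs hx (Nat.lt_succ_iff.1 (Finset.mem_range.1 ha)) le_rfl
      · intro a _ b _ h
        simpa using h
    simpa using this
  · have : (Finset.range (j + 1)).card ≤ s.card := by
      refine Finset.card_le_card_of_injOn (fun a => (⟨k, i, a⟩ : Box r)) ?_ ?_
      · intro a ha
        exact mem_of_isLowerSet hs hx le_rfl (Nat.lt_succ_iff.1 (Finset.mem_range.1 ha))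
      · intro a _ b _ h
        simpa using h
    simpa using this

/-- Boxes that can be removed from `s`. -/
noncomputable def removable (s : Finset (Box r)) : Finset (Box r) :=
  s.filter fun b => IsLowerSet ((s.erase b : Finset (Box r)) : Set (Box r))

/-- Boxes that can be added to `s`. -/
noncomputable def addable (s : Finset (Box r)) : Finset (Box r) :=
  (bigBox r (s.card + 1)).filter fun c =>
    c ∉ s ∧ IsLowerSet ((insert c s : Finset (Box r)) : Set (Box r))

lemma mem_removable {s : Finset (Box r)} {b : Box r} :
    b ∈ removable s ↔ b ∈ s ∧ IsLowerSet ((s.erase b : Finset (Box r)) : Set (Box r)) := by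
  simp [removable]

lemma mem_addable {s : Finset (Box r)} {c : Box r} :
    c ∈ addable s ↔ c ∉ s ∧ IsLowerSet ((insert c s : Finset (Box r)) : Set (Box r)) := by
  rw [addable, Finset.mem_filter, and_iff_right_iff_imp]
  rintro ⟨h, h'⟩
  rw [mem_bigBox, ← Finset.card_insert_of_notMem h]
  exact coord_lt_card h' (Finset.mem_insert_self _ _)

/-- The finite lower sets with `n` boxes. -/
noncomputable def lowers (r n : ℕ) : Finset (Finset (Box r)) :=
  (bigBox r n).powerset.filter fun s => s.card = n ∧ IsLowerSet (s : Set (Box r))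

lemma mem_lowers {n : ℕ} {s : Finset (Box r)} :
    s ∈ lowers r n ↔ s.card = n ∧ IsLowerSet (s : Set (Box r)) := by
  rw [lowers, Finset.mem_filter, and_iff_right_iff_imp]
  rintro ⟨h, h'⟩
  rw [Finset.mem_powerset]
  intro x hx
  rw [mem_bigBox, ← h]
  exact coord_lt_card h' hx

/-- The number of linear extensions of a set of `n` boxes, by removing maximal boxes. -/
noncomputable def numExt : ℕ → Finset (Box r) → ℕ
  | 0, _ => 1
  | n + 1, s => ∑ b ∈ removable s, numExt n (s.erase b)

variable (τ : Fin r → ℕ)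

/-- The first box not in row `i` of component `k` of `s`. -/
noncomputable def rowEnd (s : Finset (Box r)) (k : Fin r) (i : ℕ) : ℕ :=
  Nat.find (p := fun j => (⟨k, i, j⟩ : Box r) ∉ s) (by
    by_contra! h
    refine Set.infinite_of_injective_forall_mem (f := fun j => (⟨k, i, j⟩ : Box r)) ?_ h
      s.finite_toSet
    intro a b h
    simpa using h)

lemma mem_iff_lt_rowEnd {s : Finset (Box r)} (hs : IsLowerSet (s : Set (Box r)))
    {k : Fin r} {i j : ℕ} : (⟨k, i, j⟩ : Box r) ∈ s ↔ j < rowEnd s k i := by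
  rw [rowEnd, Nat.lt_find_iff]
  constructor
  · intro h m hm hm'
    exact hm' (mem_of_isLowerSet hs h le_rfl hm)
  · intro h
    simpa using h j le_rfl

lemma rowEnd_anti {s : Finset (Box r)} (hs : IsLowerSet (s : Set (Box r)))
    (k : Fin r) {i i' : ℕ} (h : i ≤ i') : rowEnd s k i' ≤ rowEnd s k i := by
  by_contra! h'
  have := (mem_iff_lt_rowEnd hs).2 h'
  have := (mem_iff_lt_rowEnd hs).1 (mem_of_isLowerSet hs this h le_rfl)
  omega

lemma mem_removable_iff {s : Finset (Box r)} (hs : IsLowerSet (s : Set (Box r)))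
    {k : Fin r} {i j : ℕ} : (⟨k, i, j⟩ : Box r) ∈ removable s ↔
      rowEnd s k i = j + 1 ∧ rowEnd s k (i + 1) < rowEnd s k i := by
  rw [mem_removable]
  constructor
  · rintro ⟨h, h'⟩
    have h1 := (mem_iff_lt_rowEnd hs).1 h
    have key : ∀ i' j', i ≤ i' → j ≤ j' → (i', j') ≠ (i, j) → (⟨k, i', j'⟩ : Box r) ∉ s := by
      intro i' j' hi hj hne hm
      have : (⟨k, i, j⟩ : Box r) ∈ ((s.erase ⟨k, i, j⟩ : Finset (Box r)) : Set (Box r)) := by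
        refine mem_of_isLowerSet h' (i := i') (j := j') ?_ hi hj
        simp only [Finset.coe_erase, Set.mem_sdiff, Finset.mem_coe, hm, Set.mem_singleton_iff,
          true_and]
        intro h
        apply hne
        simpa using h
      simp at this
    have h2 := key i (j + 1) le_rfl (by omega) (by simp)
    have h3 := key (i + 1) j (by omega) le_rfl (by simp)
    rw [mem_iff_lt_rowEnd hs] at h2 h3
    omega
  · rintro ⟨h, h'⟩
    refine ⟨(mem_iff_lt_rowEnd hs).2 (by omega), ?_⟩
    rintro ⟨a1, a2, a3⟩ ⟨b1, b2, b3⟩ hab ha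
    obtain ⟨h1, h2, h3⟩ := Box.le_iff.1 hab
    dsimp at h1 h2 h3
    subst h1
    simp only [Finset.coe_erase, Set.mem_sdiff, Finset.mem_coe, Set.mem_singleton_iff] at ha ⊢
    refine ⟨hs hab ha.1, ?_⟩
    intro heq
    apply ha.2
    simp only [Sigma.mk.injEq] at heq
    obtain ⟨rfl, heq⟩ := heq
    simp only [heq_eq_eq, Prod.mk.injEq] at heq
    obtain ⟨rfl, rfl⟩ := heq
    have h4 := (mem_iff_lt_rowEnd hs).1 ha.1
    have : a2 = b2 := by
      by_contra hne
      have := rowEnd_anti hs b1 (show b2 + 1 ≤ a2 by omega)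
      omega
    subst this
    have : a3 = b3 := by omega
    subst this
    rfl

lemma mem_addable_iff {s : Finset (Box r)} (hs : IsLowerSet (s : Set (Box r)))
    {k : Fin r} {i j : ℕ} : (⟨k, i, j⟩ : Box r) ∈ addable s ↔
      rowEnd s k i = j ∧ (i = 0 ∨ rowEnd s k i < rowEnd s k (i - 1)) := by
  rw [mem_addable]
  constructor
  · rintro ⟨h, h'⟩
    have h1 := mt (mem_iff_lt_rowEnd hs).2 h
    have key : ∀ i' j', i' ≤ i → j' ≤ j → (i', j') ≠ (i, j) → (⟨k, i', j'⟩ : Box r) ∈ s := by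
      intro i' j' hi hj hne
      have := mem_of_isLowerSet h' (i := i) (j := j) (k := k) (by simp) hi hj
      simp only [Finset.coe_insert, Set.mem_insert_iff, Finset.mem_coe] at this
      rcases this with h | h
      · exact absurd (by simpa using h) hne
      · exact h
    have hj : rowEnd s k i = j := by
      by_contra hne
      have := (mem_iff_lt_rowEnd hs).1 (key i (rowEnd s k i) le_rfl (by omega) (by simpa using hne))
      omega
    refine ⟨hj, ?_⟩
    rcases Nat.eq_zero_or_pos i with hi | hi
    · exact Or.inl hi
    · right
      rw [hj]
      refine (mem_iff_lt_rowEnd hs).1 (key (i - 1) j (by omega) le_rfl ?_)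
      simp
      omega
  · rintro ⟨h, h'⟩
    refine ⟨fun hm => ?_, ?_⟩
    · have := (mem_iff_lt_rowEnd hs).1 hm
      omega
    rintro ⟨a1, a2, a3⟩ ⟨b1, b2, b3⟩ hab ha
    obtain ⟨h1, h2, h3⟩ := Box.le_iff.1 hab
    dsimp at h1 h2 h3
    subst h1
    simp only [Finset.coe_insert, Set.mem_insert_iff, Finset.mem_coe] at ha ⊢
    rcases ha with heq | ha
    · simp only [Sigma.mk.injEq] at heq
      obtain ⟨rfl, heq⟩ := heq
      simp only [heq_eq_eq, Prod.mk.injEq] at heq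
      obtain ⟨rfl, rfl⟩ := heq
      by_cases hb : b2 = a2
      · subst hb
        by_cases hb' : b3 = a3
        · subst hb'
          exact Or.inl rfl
        · exact Or.inr ((mem_iff_lt_rowEnd hs).2 (by omega))
      · right
        rw [mem_iff_lt_rowEnd hs]
        have := rowEnd_anti hs b1 (show b2 ≤ a2 - 1 by omega)
        omega
    · exact Or.inr (hs hab ha)

/-- In each component there is exactly one more addable box than removable boxes. -/
lemma sum_addable {s : Finset (Box r)} (hs : IsLowerSet (s : Set (Box r))) :
    ∑ c ∈ addable s, τ c.1 = ∑ k, τ k + ∑ b ∈ removable s, τ b.1 := by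
  have hinj : Function.Injective (fun k : Fin r => (⟨k, 0, rowEnd s k 0⟩ : Box r)) := by
    intro a b h
    exact congrArg Sigma.fst h
  let sh : Box r → Box r := fun b => ⟨b.1, b.2.1 + 1, rowEnd s b.1 (b.2.1 + 1)⟩
  have hsh : Set.InjOn sh (removable s : Set (Box r)) := by
    rintro ⟨a1, a2, a3⟩ ha ⟨b1, b2, b3⟩ hb h
    have ha := ((mem_removable_iff hs).1 ha).1
    have hb := ((mem_removable_iff hs).1 hb).1
    simp only [sh, Sigma.mk.injEq] at h
    obtain ⟨rfl, h⟩ := h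
    simp only [heq_eq_eq, Prod.mk.injEq] at h
    have : a2 = b2 := by omega
    subst this
    have : a3 = b3 := by omega
    subst this
    rfl
  have hunion : addable s = (Finset.univ.image fun k : Fin r => (⟨k, 0, rowEnd s k 0⟩ : Box r)) ∪
      (removable s).image sh := by
    ext ⟨k, i, j⟩
    simp only [Finset.mem_union, Finset.mem_image, Finset.mem_univ, true_and]
    rw [mem_addable_iff hs]
    constructor
    · rintro ⟨rfl, h⟩
      rcases Nat.eq_zero_or_pos i with rfl | hi
      · exact Or.inl ⟨k, rfl⟩
      · right
        have h' : rowEnd s k i < rowEnd s k (i - 1) := by omega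
        refine ⟨⟨k, i - 1, rowEnd s k (i - 1) - 1⟩, (mem_removable_iff hs).2 ⟨by omega, ?_⟩, ?_⟩
        · rwa [Nat.sub_add_cancel hi]
        · simp only [sh]
          rw [Nat.sub_add_cancel hi]
    · rintro (⟨k', h⟩ | ⟨⟨k', i', j'⟩, hb, h⟩)
      · simp only [Sigma.mk.injEq] at h
        obtain ⟨rfl, h⟩ := h
        simp only [heq_eq_eq, Prod.mk.injEq] at h
        obtain ⟨rfl, rfl⟩ := h
        simp
      · simp only [sh, Sigma.mk.injEq] at h
        obtain ⟨rfl, h⟩ := h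
        simp only [heq_eq_eq, Prod.mk.injEq] at h
        obtain ⟨rfl, rfl⟩ := h
        have := (mem_removable_iff hs).1 hb
        simp [this.2]
  have hdisj : Disjoint (Finset.univ.image fun k : Fin r => (⟨k, 0, rowEnd s k 0⟩ : Box r))
      ((removable s).image sh) := by
    rw [Finset.disjoint_left]
    intro x hx hx'
    simp only [Finset.mem_image, Finset.mem_univ, true_and] at hx hx'
    obtain ⟨k, rfl⟩ := hx
    obtain ⟨b, _, hb⟩ := hx'
    have := congrArg (fun z : Box r => z.2.1) hb
    simp [sh] at this
  rw [hunion, Finset.sum_union hdisj, Finset.sum_image hinj.injOn, Finset.sum_image hsh]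

lemma addable_of_removable {s : Finset (Box r)} {c b : Box r} (hne : c ≠ b)
    (h : b ∈ s ∧ IsLowerSet ((s.erase b : Finset (Box r)) : Set (Box r)) ∧ c ∈ addable (s.erase b))
    (hs : IsLowerSet (s : Set (Box r))) :
    c ∈ addable s ∧ b ∈ removable (insert c s) := by
  obtain ⟨hb, _, hc⟩ := h
  obtain ⟨hc, hc'⟩ := mem_addable.1 hc
  have e1 : insert c (s.erase b) = (insert c s).erase b := by
    rw [Finset.erase_insert_of_ne hne]
  refine ⟨mem_addable.2 ⟨fun h => hc (Finset.mem_erase.2 ⟨hne, h⟩), ?_⟩,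
    mem_removable.2 ⟨Finset.mem_insert_of_mem hb, e1 ▸ hc'⟩⟩
  have := hc'.union hs
  rw [← Finset.coe_union] at this
  convert this using 2
  ext x
  simp only [Finset.mem_insert, Finset.mem_union, Finset.mem_erase]
  tauto

lemma removable_of_addable {s : Finset (Box r)} {c b : Box r} (hne : c ≠ b)
    (h : c ∈ addable s ∧ b ∈ removable (insert c s))
    (hs : IsLowerSet (s : Set (Box r))) :
    b ∈ removable s ∧ c ∈ addable (s.erase b) := by
  obtain ⟨hc, hb⟩ := h
  obtain ⟨hc, hc'⟩ := mem_addable.1 hc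
  obtain ⟨hb, hb'⟩ := mem_removable.1 hb
  have hbs : b ∈ s := Finset.mem_of_mem_insert_of_ne hb hne.symm
  have e1 : insert c (s.erase b) = (insert c s).erase b := by
    rw [Finset.erase_insert_of_ne hne]
  refine ⟨mem_removable.2 ⟨hbs, ?_⟩, mem_addable.2 ⟨fun h => hc (Finset.mem_of_mem_erase h), ?_⟩⟩
  · have := hb'.inter hs
    rw [← Finset.coe_inter] at this
    convert this using 2
    ext x
    simp only [Finset.mem_inter, Finset.mem_erase, Finset.mem_insert]
    tauto
  · rwa [e1]

lemma sum_addable_numExt (n : ℕ) {s : Finset (Box r)} (hs : IsLowerSet (s : Set (Box r)))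
    (hn : s.card = n) :
    ∑ c ∈ addable s, τ c.1 * numExt (n + 1) (insert c s) =
      (n + 1) * (∑ k, τ k) * numExt n s := by
  induction n generalizing s with
  | zero =>
    have hs0 : s = ∅ := by simpa using hn
    subst hs0
    have hsum := sum_addable τ hs
    have hrem : removable (∅ : Finset (Box r)) = ∅ := by simp [removable]
    rw [hrem, Finset.sum_empty, add_zero] at hsum
    simp only [numExt, zero_add, one_mul, mul_one]
    rw [← hsum]
    refine Finset.sum_congr rfl fun c hc => ?_
    have : removable (insert c (∅ : Finset (Box r))) = {c} := by
      ext x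
      simp only [mem_removable, Finset.mem_insert, Finset.notMem_empty, or_false,
        Finset.mem_singleton, and_iff_left_iff_imp]
      rintro rfl
      simp [IsLowerSet]
    rw [this]
    simp
  | succ n ih =>
    have h1 : ∀ c ∈ addable s, τ c.1 * numExt (n + 2) (insert c s) =
        τ c.1 * numExt (n + 1) s + ∑ b ∈ (removable (insert c s)).erase c,
          τ c.1 * numExt (n + 1) ((insert c s).erase b) := by
      intro c hc
      have hcs := (mem_addable.1 hc).1
      have hmem : c ∈ removable (insert c s) := by
        rw [mem_removable, Finset.erase_insert hcs]
        exact ⟨Finset.mem_insert_self _ _, hs⟩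
      rw [numExt, ← Finset.add_sum_erase _ _ hmem, Finset.erase_insert hcs, mul_add,
        Finset.mul_sum]
    have h2 : ∑ c ∈ addable s, ∑ b ∈ (removable (insert c s)).erase c,
          τ c.1 * numExt (n + 1) ((insert c s).erase b) =
        ∑ b ∈ removable s, ∑ c ∈ (addable (s.erase b)).erase b,
          τ c.1 * numExt (n + 1) (insert c (s.erase b)) := by
      rw [Finset.sum_sigma', Finset.sum_sigma']
      refine Finset.sum_bij' (fun x _ => ⟨x.2, x.1⟩) (fun x _ => ⟨x.2, x.1⟩) ?_ ?_ ?_ ?_ ?_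
      · rintro ⟨c, b⟩ h
        simp only [Finset.mem_sigma, Finset.mem_erase] at h ⊢
        have := removable_of_addable (Ne.symm h.2.1) ⟨h.1, h.2.2⟩ hs
        exact ⟨this.1, Ne.symm h.2.1, this.2⟩
      · rintro ⟨b, c⟩ h
        simp only [Finset.mem_sigma, Finset.mem_erase] at h ⊢
        have hb := mem_removable.1 h.1
        have := addable_of_removable h.2.1 ⟨hb.1, hb.2, h.2.2⟩ hs
        exact ⟨this.1, Ne.symm h.2.1, this.2⟩
      · intros; rfl
      · intros; rfl
      · rintro ⟨c, b⟩ h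
        simp only [Finset.mem_sigma, Finset.mem_erase] at h
        dsimp only
        rw [Finset.erase_insert_of_ne (Ne.symm h.2.1)]
    have h3 : ∀ b ∈ removable s, τ b.1 * numExt (n + 1) s +
        ∑ c ∈ (addable (s.erase b)).erase b,
          τ c.1 * numExt (n + 1) (insert c (s.erase b)) =
        (n + 1) * (∑ k, τ k) * numExt n (s.erase b) := by
      intro b hb
      obtain ⟨hbs, hb'⟩ := mem_removable.1 hb
      rw [← ih hb' (by rw [Finset.card_erase_of_mem hbs, hn]; rfl)]
      have hmem : b ∈ addable (s.erase b) := by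
        rw [mem_addable, Finset.insert_erase hbs]
        exact ⟨Finset.notMem_erase _ _, hs⟩
      rw [← Finset.add_sum_erase _ _ hmem, Finset.insert_erase hbs]
    rw [Finset.sum_congr rfl h1, Finset.sum_add_distrib, h2, ← Finset.sum_mul, sum_addable τ hs,
      add_mul, Finset.sum_mul (removable s), add_assoc, ← Finset.sum_add_distrib,
      Finset.sum_congr rfl h3, ← Finset.mul_sum]
    have : numExt (n + 1) s = ∑ b ∈ removable s, numExt n (s.erase b) := rfl
    rw [← this]
    ring

/-- The weighted count of pairs of linear extensions. -/
lemma sum_numExt_sq (n : ℕ) :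
    ∑ s ∈ lowers r n, numExt n s ^ 2 * ∏ c ∈ s, τ c.1 = (∑ k, τ k) ^ n * n.factorial := by
  induction n with
  | zero =>
    have : lowers r 0 = {∅} := by
      ext s
      simp only [mem_lowers, Finset.card_eq_zero, Finset.mem_singleton, and_iff_left_iff_imp]
      rintro rfl
      simp [IsLowerSet]
    simp [this, numExt]
  | succ n ih =>
    have h1 : ∑ s ∈ lowers r (n + 1), numExt (n + 1) s ^ 2 * ∏ c ∈ s, τ c.1 =
        ∑ s ∈ lowers r n, ∑ c ∈ addable s,
          numExt (n + 1) (insert c s) * numExt n s * (τ c.1 * ∏ c ∈ s, τ c.1) := by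
      have : ∀ s ∈ lowers r (n + 1), numExt (n + 1) s ^ 2 * ∏ c ∈ s, τ c.1 =
          ∑ b ∈ removable s, numExt (n + 1) s * numExt n (s.erase b) * ∏ c ∈ s, τ c.1 := by
        intro s _
        rw [← Finset.sum_mul, ← Finset.mul_sum, sq]
        rfl
      rw [Finset.sum_congr rfl this, Finset.sum_sigma', Finset.sum_sigma']
      refine Finset.sum_bij' (fun x _ => ⟨x.1.erase x.2, x.2⟩) (fun x _ => ⟨insert x.2 x.1, x.2⟩)
        ?_ ?_ ?_ ?_ ?_
      · rintro ⟨s, b⟩ h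
        simp only [Finset.mem_sigma, mem_lowers, mem_removable] at h
        simp only [Finset.mem_sigma, mem_lowers, mem_addable]
        rw [Finset.insert_erase h.2.1, Finset.card_erase_of_mem h.2.1]
        exact ⟨⟨by omega, h.2.2⟩, Finset.notMem_erase _ _, h.1.2⟩
      · rintro ⟨s, c⟩ h
        simp only [Finset.mem_sigma, mem_lowers, mem_addable] at h
        simp only [Finset.mem_sigma, mem_lowers, mem_removable]
        rw [Finset.card_insert_of_notMem h.2.1, Finset.erase_insert h.2.1]
        exact ⟨⟨by omega, h.2.2⟩, Finset.mem_insert_self _ _, h.1.2⟩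
      · rintro ⟨s, b⟩ h
        simp only [Finset.mem_sigma, mem_removable] at h
        simp only [Finset.insert_erase h.2.1]
      · rintro ⟨s, c⟩ h
        simp only [Finset.mem_sigma, mem_addable] at h
        simp only [Finset.erase_insert h.2.1]
      · rintro ⟨s, b⟩ h
        simp only [Finset.mem_sigma, mem_removable] at h
        dsimp only
        rw [Finset.insert_erase h.2.1, Finset.mul_prod_erase s (fun c => τ c.1) h.2.1]
    have h2 : ∀ s ∈ lowers r n, ∑ c ∈ addable s,
          numExt (n + 1) (insert c s) * numExt n s * (τ c.1 * ∏ c ∈ s, τ c.1) =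
        (n + 1) * (∑ k, τ k) * (numExt n s ^ 2 * ∏ c ∈ s, τ c.1) := by
      intro s hs
      obtain ⟨hc, hl⟩ := mem_lowers.1 hs
      have := sum_addable_numExt τ n hl hc
      calc _ = (∑ c ∈ addable s, τ c.1 * numExt (n + 1) (insert c s)) *
            (numExt n s * ∏ c ∈ s, τ c.1) := by
              rw [Finset.sum_mul]
              exact Finset.sum_congr rfl fun c _ => by ring
        _ = _ := by rw [this]; ring
    rw [h1, Finset.sum_congr rfl h2, ← Finset.mul_sum, ih, Nat.factorial_succ]
    ring

/-- Linear extensions of `s`, as enumerations of the boxes of `s`. -/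
def IsExt {n : ℕ} (s : Finset (Box r)) (q : Fin n → Box r) : Prop :=
  Function.Injective q ∧ (∀ x, x ∈ s ↔ ∃ i, q i = x) ∧ ∀ i j, q i ≤ q j → i ≤ j

lemma finite_isExt (n : ℕ) (s : Finset (Box r)) : Finite {q : Fin n → Box r // IsExt s q} := by
  refine Finite.of_injective
    (fun q i => (⟨q.1 i, (q.2.2.1 _).2 ⟨i, rfl⟩⟩ : s) :
      {q : Fin n → Box r // IsExt s q} → Fin n → s) ?_
  intro q q' h
  ext1
  funext i
  exact congrArg Subtype.val (congrFun h i)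

lemma card_isExt_le (n : ℕ) {s : Finset (Box r)} (hs : IsLowerSet (s : Set (Box r))) :
    Nat.card {q : Fin n → Box r // IsExt s q} ≤ numExt n s := by
  induction n generalizing s with
  | zero =>
    rw [numExt]
    have : Subsingleton {q : Fin 0 → Box r // IsExt s q} := inferInstance
    exact Finite.card_le_one_iff_subsingleton.2 this
  | succ n ih =>
    have := finite_isExt n (r := r)
    have hlast : ∀ q : {q : Fin (n + 1) → Box r // IsExt s q}, q.1 (Fin.last n) ∈ removable s := by
      rintro ⟨q, hq⟩
      refine mem_removable.2 ⟨(hq.2.1 _).2 ⟨_, rfl⟩, ?_⟩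
      intro a b hba ha
      simp only [Finset.coe_erase, Set.mem_sdiff, Finset.mem_coe, Set.mem_singleton_iff] at ha ⊢
      refine ⟨hs hba ha.1, ?_⟩
      rintro rfl
      obtain ⟨i, rfl⟩ := (hq.2.1 _).1 ha.1
      have := hq.2.2 _ _ hba
      have : i = Fin.last n := Fin.last_le_iff.1 this
      subst this
      exact ha.2 rfl
    have hinit : ∀ q : {q : Fin (n + 1) → Box r // IsExt s q},
        IsExt (s.erase (q.1 (Fin.last n))) (Fin.init q.1) := by
      rintro ⟨q, hq⟩
      refine ⟨fun i j h => Fin.castSucc_injective _ (hq.1 h), fun x => ?_, fun i j h => ?_⟩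
      · rw [Finset.mem_erase, hq.2.1]
        constructor
        · rintro ⟨h, i, rfl⟩
          induction i using Fin.lastCases with
          | last => exact absurd rfl h
          | cast i => exact ⟨i, rfl⟩
        · rintro ⟨i, rfl⟩
          refine ⟨fun h => ?_, ⟨_, rfl⟩⟩
          exact (Fin.castSucc_lt_last i).ne (hq.1 h)
      · simpa using hq.2.2 _ _ h
    let Φ : {q : Fin (n + 1) → Box r // IsExt s q} →
        Σ b : removable s, {q : Fin n → Box r // IsExt (s.erase b.1) q} :=
      fun q => ⟨⟨q.1 (Fin.last n), hlast q⟩, ⟨Fin.init q.1, hinit q⟩⟩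
    have hΦ : Function.Injective Φ := by
      rintro ⟨q, hq⟩ ⟨q', hq'⟩ h
      have h1 : q (Fin.last n) = q' (Fin.last n) := congrArg (fun z => z.1.1) h
      have h2 : Fin.init q = Fin.init q' := congrArg (fun z => z.2.1) h
      refine Subtype.ext ?_
      change q = q'
      rw [← Fin.snoc_init_self q, ← Fin.snoc_init_self q', h1, h2]
    refine (Nat.card_le_card_of_injective Φ hΦ).trans ?_
    rw [Nat.card_sigma, numExt, ← Finset.sum_coe_sort (removable s)]
    refine Finset.sum_le_sum fun b _ => ih (mem_removable.1 b.2).2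

end MultiYoung

/-! ### Consequences of cyclic cellularity for the base algebra -/

/-- The span of the elements `u * y γ * w` with `γ` strictly above `l k`. -/
def aboveSpan (R : Type*) [CommRing R] {A : Type*} [Ring A] [Algebra R A] {Γ : Type*}
    [PartialOrder Γ] (y : Γ → A) {r : ℕ} (l : Fin r → Γ) (k : Fin r) : Submodule R A :=
  Submodule.span R {x | ∃ (k' : Fin r) (u w : A), l k < l k' ∧ x = u * y (l k') * w}

namespace CellDatum

variable {R : Type*} [CommRing R] {A : Type*} [Ring A] [Algebra R A]
  {Γ : Type*} [PartialOrder Γ] {T : Γ → Type*} [∀ γ, Fintype (T γ)]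
  (D : CellDatum R A Γ T)

lemma Abar_mono {γ μ : Γ} (h : γ ≤ μ) : D.Abar μ ≤ D.Abar γ :=
  Submodule.span_mono fun _ ⟨ν, hν, h'⟩ => ⟨ν, h.trans_lt hν, h'⟩

lemma c_mem_Abar {γ μ : Γ} (h : γ < μ) (s t : T μ) : D.c μ s t ∈ D.Abar γ :=
  Submodule.subset_span ⟨μ, h, s, t, rfl⟩

lemma mul_mem_Abar {γ : Γ} {x : A} (hx : x ∈ D.Abar γ) (a : A) : a * x ∈ D.Abar γ := by
  induction hx using Submodule.span_induction with
  | mem x h =>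
    obtain ⟨μ, hμ, s, t, rfl⟩ := h
    obtain ⟨ρ, hρ⟩ := D.mult μ s a
    have h1 := D.Abar_mono hμ.le (hρ t)
    have h2 : ∑ v, ρ v • D.c μ v t ∈ D.Abar γ :=
      Submodule.sum_mem _ fun v _ => Submodule.smul_mem _ _ (D.c_mem_Abar hμ _ _)
    simpa using add_mem h1 h2
  | zero => simp
  | add x y _ _ hx hy => rw [mul_add]; exact add_mem hx hy
  | smul c x _ hx => rw [mul_smul_comm]; exact Submodule.smul_mem _ _ hx

lemma star_mem_Abar {γ : Γ} {x : A} (hx : x ∈ D.Abar γ) : D.star x ∈ D.Abar γ := by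
  induction hx using Submodule.span_induction with
  | mem x h =>
    obtain ⟨μ, hμ, s, t, rfl⟩ := h
    have h1 := D.Abar_mono hμ.le (D.star_c μ s t)
    simpa using add_mem h1 (D.c_mem_Abar hμ t s)
  | zero => simp
  | add x y _ _ hx hy => rw [map_add]; exact add_mem hx hy
  | smul c x _ hx => rw [map_smul]; exact Submodule.smul_mem _ _ hx

lemma mem_mul_Abar {γ : Γ} {x : A} (hx : x ∈ D.Abar γ) (a : A) : x * a ∈ D.Abar γ := by
  have := D.star_mem_Abar (D.mul_mem_Abar (D.star_mem_Abar hx) (D.star a))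
  rwa [D.star_mul, D.star_star, D.star_star] at this

variable (M : Γ → Type*) [∀ γ, AddCommGroup (M γ)] [∀ γ, Module R (M γ)]
  [∀ γ, Module A (M γ)] [∀ γ, IsScalarTower R A (M γ)]
  (e : ∀ γ, T γ → M γ) (hM : ∀ γ, IsCellModule D γ (M γ) (e γ))
  (p : ∀ γ, T γ → R) (y : Γ → A)
  (hylift : ∀ γ,
    y γ - ∑ s : T γ, ∑ t : T γ, (p γ s * p γ t) • D.c γ s t ∈ D.Abar γ)
  (vv : ∀ γ, T γ → A) (hvv : ∀ γ (t : T γ), vv γ t • ∑ s : T γ, p γ s • e γ s = e γ t)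

/-- The action of `a` on the cell basis, averaged against the generator. -/
lemma exists_mul_sum_c (γ : Γ) (a : A) : ∃ ρ : T γ → R, ∀ t,
    a * ∑ s, p γ s • D.c γ s t - ∑ u, ρ u • D.c γ u t ∈ D.Abar γ := by
  choose ρ hρ using fun s => D.mult γ s a
  refine ⟨fun u => ∑ s, p γ s * ρ s u, fun t => ?_⟩
  have : a * ∑ s, p γ s • D.c γ s t - ∑ u, (∑ s, p γ s * ρ s u) • D.c γ u t =
      ∑ s, p γ s • (a * D.c γ s t - ∑ u, ρ s u • D.c γ u t) := by
    simp only [smul_sub, Finset.sum_sub_distrib, Finset.mul_sum, mul_smul_comm, Finset.smul_sum,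
      Finset.sum_smul, smul_smul]
    congr 1
    exact Finset.sum_comm
  rw [this]
  exact Submodule.sum_mem _ fun s _ => Submodule.smul_mem _ _ (hρ s t)

include hM hvv in
lemma vv_mul_sum_c (γ : Γ) (u t : T γ) :
    vv γ u * ∑ s, p γ s • D.c γ s t - D.c γ u t ∈ D.Abar γ := by
  choose ρ hρ using fun s => D.mult γ s (vv γ u)
  obtain ⟨hind, _, hact⟩ := hM γ
  have h1 : ∀ s, vv γ u • e γ s = ∑ w, ρ s w • e γ w := fun s => hact _ s _ (hρ s)
  have h2 : ∑ w, (∑ s, p γ s * ρ s w) • e γ w = e γ u := by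
    rw [← hvv γ u]
    simp only [Finset.smul_sum, Finset.sum_smul]
    rw [Finset.sum_comm]
    refine Finset.sum_congr rfl fun s _ => ?_
    rw [← algebraMap_smul A (p γ s) (e γ s), smul_smul, ← Algebra.commutes, mul_smul, h1,
      algebraMap_smul, Finset.smul_sum]
    simp [smul_smul]
  have h3 : ∀ w, ∑ s, p γ s * ρ s w = if w = u then 1 else 0 := by
    have : ∑ w, ((∑ s, p γ s * ρ s w) - if w = u then 1 else 0) • e γ w = 0 := by
      simp only [sub_smul, Finset.sum_sub_distrib, h2]
      simp
    intro w
    exact sub_eq_zero.1 (Fintype.linearIndependent_iff.1 hind _ this w)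
  have : vv γ u * ∑ s, p γ s • D.c γ s t - D.c γ u t =
      ∑ s, p γ s • (vv γ u * D.c γ s t - ∑ w, ρ s w • D.c γ w t) := by
    have h4 : ∑ s, p γ s • ∑ w, ρ s w • D.c γ w t = D.c γ u t := by
      calc _ = ∑ w, (∑ s, p γ s * ρ s w) • D.c γ w t := by
            simp only [Finset.smul_sum, Finset.sum_smul, smul_smul]
            exact Finset.sum_comm
        _ = _ := by simp [h3]
    rw [Finset.mul_sum]
    simp only [smul_sub, Finset.sum_sub_distrib, h4, mul_smul_comm]
  rw [this]
  exact Submodule.sum_mem _ fun s _ => Submodule.smul_mem _ _ (hρ s t)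

lemma sum_sum_c (γ : Γ) : ∑ s : T γ, ∑ t : T γ, (p γ s * p γ t) • D.c γ s t =
    ∑ t, p γ t • ∑ s, p γ s • D.c γ s t := by
  rw [Finset.sum_comm]
  simp only [Finset.smul_sum, smul_smul, mul_comm]

include hylift in
/-- Left multiplication of `y γ` by an arbitrary element. -/
lemma mul_y (γ : Γ) (a : A) (ρ : T γ → R)
    (hρ : ∀ t, a * ∑ s, p γ s • D.c γ s t - ∑ u, ρ u • D.c γ u t ∈ D.Abar γ) :
    a * y γ - ∑ u, ρ u • ∑ t, p γ t • D.c γ u t ∈ D.Abar γ := by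
  have h1 := D.mul_mem_Abar (hylift γ) a
  have h2 : a * (∑ t, p γ t • ∑ s, p γ s • D.c γ s t) -
      ∑ u, ρ u • ∑ t, p γ t • D.c γ u t ∈ D.Abar γ := by
    have : a * (∑ t, p γ t • ∑ s, p γ s • D.c γ s t) -
        ∑ u, ρ u • ∑ t, p γ t • D.c γ u t =
        ∑ t, p γ t • (a * ∑ s, p γ s • D.c γ s t - ∑ u, ρ u • D.c γ u t) := by
      simp only [Finset.mul_sum (Finset.univ : Finset (T γ)) _ a, smul_sub,
        Finset.sum_sub_distrib, mul_smul_comm]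
      congr 1
      simp only [Finset.smul_sum]
      rw [Finset.sum_comm]
      simp only [smul_smul, mul_comm]
    rw [this]
    exact Submodule.sum_mem _ fun s _ => Submodule.smul_mem _ _ (hρ s)
  rw [sum_sum_c, mul_sub] at h1
  simpa using add_mem h1 h2

include hM hylift hvv in
lemma vv_mul_y (γ : Γ) (u : T γ) :
    vv γ u * y γ - ∑ t, p γ t • D.c γ u t ∈ D.Abar γ := by
  simpa [Pi.single_apply] using D.mul_y p y hylift γ (vv γ u) (Pi.single u 1)
    (fun t => by simpa [Pi.single_apply] using D.vv_mul_sum_c M e hM p vv hvv γ u t)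

include hM hylift hvv in
lemma mul_y_mem (γ : Γ) (a : A) :
    ∃ b ∈ Submodule.span R (Set.range fun t : T γ => vv γ t * y γ),
      a * y γ - b ∈ D.Abar γ := by
  obtain ⟨ρ, hρ⟩ := D.exists_mul_sum_c p γ a
  refine ⟨∑ u, ρ u • (vv γ u * y γ), Submodule.sum_mem _ fun u _ =>
    Submodule.smul_mem _ _ (Submodule.subset_span ⟨u, rfl⟩), ?_⟩
  have h1 := D.mul_y p y hylift γ a ρ hρ
  have h2 : ∑ u, ρ u • (vv γ u * y γ - ∑ t, p γ t • D.c γ u t) ∈ D.Abar γ :=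
    Submodule.sum_mem _ fun u _ => Submodule.smul_mem _ _
      (D.vv_mul_y M e hM p y hylift vv hvv γ u)
  simp only [smul_sub, Finset.sum_sub_distrib] at h2
  simpa using sub_mem h1 h2

include hylift in
lemma star_y_sub (γ : Γ) : D.star (y γ) - y γ ∈ D.Abar γ := by
  have h1 := D.star_mem_Abar (hylift γ)
  have h2 : D.star (∑ s : T γ, ∑ t : T γ, (p γ s * p γ t) • D.c γ s t) -
      ∑ s : T γ, ∑ t : T γ, (p γ s * p γ t) • D.c γ s t ∈ D.Abar γ := by
    have : D.star (∑ s : T γ, ∑ t : T γ, (p γ s * p γ t) • D.c γ s t) -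
        ∑ s : T γ, ∑ t : T γ, (p γ s * p γ t) • D.c γ s t =
        ∑ s : T γ, ∑ t : T γ, (p γ s * p γ t) • (D.star (D.c γ s t) - D.c γ t s) := by
      simp only [smul_sub, Finset.sum_sub_distrib, map_sum, map_smul]
      congr 1
      rw [Finset.sum_comm]
      simp only [mul_comm]
    rw [this]
    exact Submodule.sum_mem _ fun s _ => Submodule.sum_mem _ fun t _ =>
      Submodule.smul_mem _ _ (D.star_c γ s t)
  rw [map_sub] at h1
  have := sub_mem (add_mem h1 h2) (hylift γ)
  convert this using 1
  abel

include hM hylift hvv in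
lemma c_sub_mem (γ : Γ) (s t : T γ) :
    D.c γ s t - vv γ s * y γ * D.star (vv γ t) ∈ D.Abar γ := by
  have h1 := D.mem_mul_Abar (D.vv_mul_y M e hM p y hylift vv hvv γ s) (D.star (vv γ t))
  have h2 : (∑ u, p γ u • D.c γ s u) * D.star (vv γ t) - D.c γ s t ∈ D.Abar γ := by
    have h3 := D.star_mem_Abar (D.vv_mul_sum_c M e hM p vv hvv γ t s)
    rw [map_sub, D.star_mul] at h3
    have h4 : (D.star (∑ u, p γ u • D.c γ u s) - ∑ u, p γ u • D.c γ s u) * D.star (vv γ t) ∈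
        D.Abar γ := by
      refine D.mem_mul_Abar ?_ _
      simp only [map_sum, map_smul, ← Finset.sum_sub_distrib, ← smul_sub]
      exact Submodule.sum_mem _ fun u _ => Submodule.smul_mem _ _ (D.star_c γ u s)
    have h5 := D.star_c γ t s
    have := add_mem (sub_mem h3 h4) h5
    convert this using 1
    rw [sub_mul]
    abel
  have := neg_mem (add_mem h1 h2)
  convert this using 1
  rw [sub_mul]
  abel

variable {r : ℕ} (l : Fin r → Γ) (hl : Function.Bijective l)

include hM hylift hvv hl in
lemma c_mem_aboveSpan (γ : Γ) : ∀ (s t : T γ) (P : Submodule R A),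
    (∀ (μ : Γ) (u w : A), γ ≤ μ → u * y μ * w ∈ P) → D.c γ s t ∈ P := by
  have : Finite Γ := Finite.of_surjective l hl.2
  induction γ using WellFoundedGT.induction with
  | ind γ ih =>
    intro s t P hP
    have h1 := D.c_sub_mem M e hM p y hylift vv hvv γ s t
    have h2 : D.Abar γ ≤ P := by
      refine Submodule.span_le.2 ?_
      rintro x ⟨μ, hμ, u, w, rfl⟩
      exact ih μ hμ u w P fun ν u' w' h => hP ν u' w' (hμ.le.trans h)
    simpa using add_mem (h2 h1) (hP γ (vv γ s) (D.star (vv γ t)) le_rfl)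

include hM hylift hvv hl in
lemma Abar_le_aboveSpan (k : Fin r) : D.Abar (l k) ≤ aboveSpan R y l k := by
  refine Submodule.span_le.2 ?_
  rintro x ⟨μ, hμ, u, w, rfl⟩
  refine D.c_mem_aboveSpan M e hM p y hylift vv hvv l hl μ u w _ fun ν u' w' h => ?_
  obtain ⟨k', rfl⟩ := hl.2 ν
  exact Submodule.subset_span ⟨k', u', w', hμ.trans_le h, rfl⟩

end CellDatum

/-- The properties of a cyclic cellular algebra used for the wreath product. -/
structure CyclicCellular {R : Type*} [CommRing R] {A : Type*} [Ring A] [Algebra R A]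
    {Γ : Type*} [PartialOrder Γ] {T : Γ → Type*} {r : ℕ}
    (star : A →ₗ[R] A) (y : Γ → A) (vv : ∀ γ, T γ → A) (l : Fin r → Γ) : Prop where
  star_mul : ∀ a b : A, star (a * b) = star b * star a
  star_star : ∀ a : A, star (star a) = a
  star_y : ∀ k, star (y (l k)) - y (l k) ∈ aboveSpan R y l k
  mul_y : ∀ k a, ∃ b ∈ Submodule.span R (Set.range fun t : T (l k) => vv (l k) t * y (l k)),
    a * y (l k) - b ∈ aboveSpan R y l k
  mem_span : ∀ a : A, a ∈ Submodule.span R {x | ∃ (k : Fin r) (u w : A), x = u * y (l k) * w}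

lemma CellDatum.cyclicCellular {R : Type*} [CommRing R] {A : Type*} [Ring A] [Algebra R A]
    {Γ : Type*} [PartialOrder Γ] {T : Γ → Type*} [∀ γ, Fintype (T γ)]
    (D : CellDatum R A Γ T)
    (M : Γ → Type*) [∀ γ, AddCommGroup (M γ)] [∀ γ, Module R (M γ)]
    [∀ γ, Module A (M γ)] [∀ γ, IsScalarTower R A (M γ)]
    (e : ∀ γ, T γ → M γ) (hM : ∀ γ, IsCellModule D γ (M γ) (e γ))
    (p : ∀ γ, T γ → R) (y : Γ → A)
    (hylift : ∀ γ,
      y γ - ∑ s : T γ, ∑ t : T γ, (p γ s * p γ t) • D.c γ s t ∈ D.Abar γ)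
    (vv : ∀ γ, T γ → A) (hvv : ∀ γ (t : T γ), vv γ t • ∑ s : T γ, p γ s • e γ s = e γ t)
    {r : ℕ} (l : Fin r → Γ) (hl : Function.Bijective l) :
    CyclicCellular D.star y vv l where
  star_mul := D.star_mul
  star_star := D.star_star
  star_y k := D.Abar_le_aboveSpan M e hM p y hylift vv hvv l hl k (D.star_y_sub p y hylift _)
  mul_y k a := by
    obtain ⟨b, hb, h⟩ := D.mul_y_mem M e hM p y hylift vv hvv (l k) a
    exact ⟨b, hb, D.Abar_le_aboveSpan M e hM p y hylift vv hvv l hl k h⟩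
  mem_span a := by
    have ha : a ∈ (⊤ : Submodule R A) := trivial
    rw [← D.span_top] at ha
    refine Submodule.span_le.2 ?_ ha
    rintro _ ⟨⟨γ, s, t⟩, rfl⟩
    refine D.c_mem_aboveSpan M e hM p y hylift vv hvv l hl γ s t _ fun ν u w _ => ?_
    obtain ⟨k, rfl⟩ := hl.2 ν
    exact Submodule.subset_span ⟨k, u, w, rfl⟩

/-! ### The wreath product -/

lemma MultilinearMap.mem_of_forall_mem_span {R ι : Type*} [CommRing R] [Finite ι] {E : ι → Type*}
    {N : Type*} [∀ i, AddCommGroup (E i)] [∀ i, Module R (E i)] [AddCommGroup N] [Module R N]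
    (g : MultilinearMap R E N) (S : ∀ i, Set (E i)) (P : Submodule R N)
    (h : ∀ s : ∀ i, E i, (∀ i, s i ∈ S i) → g s ∈ P) (a : ∀ i, E i)
    (ha : ∀ i, a i ∈ Submodule.span R (S i)) : g a ∈ P := by
  cases nonempty_fintype ι
  have key : ∀ Z : Finset ι, ∀ a : ∀ i, E i, (∀ i ∈ Z, a i ∈ Submodule.span R (S i)) →
      (∀ i ∉ Z, a i ∈ S i) → g a ∈ P := by
    intro Z
    induction Z using Finset.induction_on with
    | empty => exact fun a _ h2 => h a fun i => h2 i (by simp)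
    | insert i Z hi ih =>
      intro a h1 h2
      have hP : Submodule.span R (S i) ≤ P.comap (g.toLinearMap a i) := by
        refine Submodule.span_le.2 fun x hx => ih _ (fun j hj => ?_) (fun j hj => ?_)
        · have hji : j ≠ i := fun h => hi (h ▸ hj)
          rw [Function.update_of_ne hji]
          exact h1 j (Finset.mem_insert_of_mem hj)
        · by_cases hji : j = i
          · subst hji; simpa using hx
          · rw [Function.update_of_ne hji]
            exact h2 j (by simp [hji, hj])
      simpa using hP (h1 i (Finset.mem_insert_self _ _))
  exact key Finset.univ a (fun i _ => ha i) (by simp)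

section Wreath

variable {R : Type*} [CommRing R] {A : Type*} [Ring A] [Algebra R A]
  {n : ℕ} {W : Type*} [Ring W] [Algebra R W]

/-- `wm φ · π` as a multilinear map. -/
noncomputable def wmM
    (φ : ((⨂[R] _ : Fin n, A) ⊗[R] (Equiv.Perm (Fin n) →₀ R)) ≃ₗ[R] W)
    (π : Equiv.Perm (Fin n)) : MultilinearMap R (fun _ : Fin n => A) W :=
  (φ.toLinearMap ∘ₗ (TensorProduct.mk R _ _).flip (Finsupp.single π 1)).compMultilinearMap
    (PiTensorProduct.tprod R)

/-- The wreath product structure on `W`. -/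
structure IsWreath
    (φ : ((⨂[R] _ : Fin n, A) ⊗[R] (Equiv.Perm (Fin n) →₀ R)) ≃ₗ[R] W)
    (star : A →ₗ[R] A) (starW : W →ₗ[R] W) : Prop where
  one : wm φ (fun _ => (1 : A)) 1 = 1
  mul : ∀ (a b : Fin n → A) (π σ : Equiv.Perm (Fin n)),
    wm φ a π * wm φ b σ = wm φ (fun i => a i * b (π⁻¹ i)) (π * σ)
  starW_wm : ∀ (a : Fin n → A) (π : Equiv.Perm (Fin n)),
    starW (wm φ a π) = wm φ (fun i => star (a (π i))) π⁻¹

variable {φ : ((⨂[R] _ : Fin n, A) ⊗[R] (Equiv.Perm (Fin n) →₀ R)) ≃ₗ[R] W}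
    {star : A →ₗ[R] A} {starW : W →ₗ[R] W}

lemma wmM_apply (π : Equiv.Perm (Fin n)) (a : Fin n → A) : wmM φ π a = wm φ a π := rfl

lemma span_wm : Submodule.span R
    (Set.range fun x : (Fin n → A) × Equiv.Perm (Fin n) => wm φ x.1 x.2) = ⊤ := by
  refine eq_top_iff.2 fun w hw => ?_
  clear hw
  obtain ⟨x, rfl⟩ := φ.surjective w
  induction x using TensorProduct.induction_on with
  | zero => simp
  | add x y hx hy => rw [map_add]; exact add_mem hx hy
  | tmul x y =>
    induction y using Finsupp.induction_linear with
    | zero => simp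
    | add f g hf hg => rw [TensorProduct.tmul_add, map_add]; exact add_mem hf hg
    | single π c =>
      induction x using PiTensorProduct.induction_on with
      | smul_tprod k a =>
        rw [← mul_one c, ← smul_eq_mul, ← Finsupp.smul_single, TensorProduct.tmul_smul,
          map_smul, ← TensorProduct.smul_tmul', map_smul]
        exact Submodule.smul_mem _ _ (Submodule.smul_mem _ _
          (Submodule.subset_span ⟨(a, π), rfl⟩))
      | add x y hx hy => rw [TensorProduct.add_tmul, map_add]; exact add_mem hx hy

namespace IsWreath

variable (hw : IsWreath φ star starW)
include hw

lemma sElt_one : sElt φ 1 = 1 := hw.one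

lemma sElt_mul (π σ : Equiv.Perm (Fin n)) : sElt φ π * sElt φ σ = sElt φ (π * σ) := by
  simp [sElt, hw.mul]

lemma wm_mul_sElt (a : Fin n → A) (π σ : Equiv.Perm (Fin n)) :
    wm φ a π * sElt φ σ = wm φ a (π * σ) := by
  simp [sElt, hw.mul]

lemma wm_one_mul (a b : Fin n → A) : wm φ a 1 * wm φ b 1 = wm φ (fun i => a i * b i) 1 := by
  simp [hw.mul]

lemma sElt_mul_wm (π : Equiv.Perm (Fin n)) (b : Fin n → A) :
    sElt φ π * wm φ b 1 = wm φ (fun i => b (π⁻¹ i)) 1 * sElt φ π := by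
  simp [sElt, hw.mul]

lemma starW_mul (hmul : ∀ a b : A, star (a * b) = star b * star a) (x z : W) :
    starW (x * z) = starW z * starW x := by
  have hx : x ∈ (⊤ : Submodule R W) := trivial
  have hz : z ∈ (⊤ : Submodule R W) := trivial
  rw [← span_wm (φ := φ)] at hx hz
  induction hx using Submodule.span_induction with
  | zero => simp
  | add x x' _ _ h h' => simp [add_mul, mul_add, h, h']
  | smul c x _ h => simp [h]
  | mem x h =>
    obtain ⟨⟨a, π⟩, rfl⟩ := h
    induction hz using Submodule.span_induction with
    | zero => simp
    | add x x' _ _ h h' => simp [add_mul, mul_add, h, h']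
    | smul c x _ h => simp [h]
    | mem x h =>
      obtain ⟨⟨b, σ⟩, rfl⟩ := h
      simp [hw.mul, hw.starW_wm, hmul]

lemma starW_starW (hstar : ∀ a : A, star (star a) = a) (x : W) : starW (starW x) = x := by
  have hx : x ∈ (⊤ : Submodule R W) := trivial
  rw [← span_wm (φ := φ)] at hx
  induction hx using Submodule.span_induction with
  | zero => simp
  | add x x' _ _ h h' => simp [h, h']
  | smul c x _ h => simp [h]
  | mem x h =>
    obtain ⟨⟨a, π⟩, rfl⟩ := h
    simp [hw.starW_wm, hstar]

lemma starW_sElt (hmul : ∀ a b : A, star (a * b) = star b * star a)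
    (hstar : ∀ a : A, star (star a) = a) (σ : Equiv.Perm (Fin n)) :
    starW (sElt φ σ) = sElt φ σ⁻¹ := by
  have h1 : star 1 = 1 := by
    have := hmul 1 (star 1)
    simpa [hstar] using this.symm
  simp [sElt, hw.starW_wm, h1]

end IsWreath

end Wreath

/-! ### Row functions

A row function `f : Fin n → Fin r × ℕ` sends every position to a component and a row. -/

section RowFunctions

/-- The permutations preserving the fibres of `f`. -/
noncomputable def stab {n : ℕ} {α : Type*} (f : Fin n → α) : Finset (Equiv.Perm (Fin n)) :=
  Finset.univ.filter fun σ => ∀ i, f (σ i) = f i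

lemma mem_stab {n : ℕ} {α : Type*} {f : Fin n → α} {σ : Equiv.Perm (Fin n)} :
    σ ∈ stab f ↔ ∀ i, f (σ i) = f i := by simp [stab]

lemma inv_mem_stab {n : ℕ} {α : Type*} {f : Fin n → α} {σ : Equiv.Perm (Fin n)}
    (h : σ ∈ stab f) : σ⁻¹ ∈ stab f := by
  rw [mem_stab] at *
  intro i
  simpa using (h (σ⁻¹ i)).symm

lemma mul_mem_stab {n : ℕ} {α : Type*} {f : Fin n → α} {σ τ : Equiv.Perm (Fin n)}
    (h : σ ∈ stab f) (h' : τ ∈ stab f) : σ * τ ∈ stab f := by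
  rw [mem_stab] at *
  intro i
  simp [h, h']

variable {Γ : Type*} [PartialOrder Γ] {r n : ℕ}

/-- The positions lying strictly above component `k`, or in a row of `k` belonging to `J`. -/
noncomputable def cntSet (l : Fin r → Γ) (f : Fin n → Fin r × ℕ) (k : Fin r) (J : Finset ℕ) :
    Finset (Fin n) :=
  Finset.univ.filter fun m => l k < l (f m).1 ∨ ((f m).1 = k ∧ (f m).2 ∈ J)

lemma mem_cntSet {l : Fin r → Γ} {f : Fin n → Fin r × ℕ} {k : Fin r} {J : Finset ℕ} {m : Fin n} :
    m ∈ cntSet l f k J ↔ l k < l (f m).1 ∨ ((f m).1 = k ∧ (f m).2 ∈ J) := by simp [cntSet]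

/-- Dominance of row functions. -/
def Dom (l : Fin r → Γ) (g f : Fin n → Fin r × ℕ) : Prop :=
  ∀ k J, ∃ J' : Finset ℕ, J'.card ≤ J.card ∧ (cntSet l f k J).card ≤ (cntSet l g k J').card

/-- Strict dominance of row functions. -/
def SDom (l : Fin r → Γ) (g f : Fin n → Fin r × ℕ) : Prop := Dom l g f ∧ ¬ Dom l f g

lemma Dom.refl (l : Fin r → Γ) (f : Fin n → Fin r × ℕ) : Dom l f f :=
  fun _ J => ⟨J, le_rfl, le_rfl⟩

lemma Dom.trans {l : Fin r → Γ} {h g f : Fin n → Fin r × ℕ} (h1 : Dom l h g) (h2 : Dom l g f) :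
    Dom l h f := fun k J => by
  obtain ⟨J', hJ', hc'⟩ := h2 k J
  obtain ⟨J'', hJ'', hc''⟩ := h1 k J'
  exact ⟨J'', hJ''.trans hJ', hc'.trans hc''⟩

lemma SDom.trans_dom {l : Fin r → Γ} {h g f : Fin n → Fin r × ℕ} (h1 : SDom l h g)
    (h2 : Dom l g f) : SDom l h f :=
  ⟨h1.1.trans h2, fun h3 => h1.2 (h2.trans h3)⟩

lemma card_cntSet_comp (l : Fin r → Γ) (f : Fin n → Fin r × ℕ) (ρ : Equiv.Perm (Fin n))
    (k : Fin r) (J : Finset ℕ) : (cntSet l (f ∘ ρ) k J).card = (cntSet l f k J).card := by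
  refine Finset.card_bij (fun m _ => ρ m) (fun m hm => ?_) (fun _ _ _ _ h => ρ.injective h)
    fun m hm => ⟨ρ⁻¹ m, ?_, by simp⟩
  · rw [mem_cntSet] at *; exact hm
  · rw [mem_cntSet] at *; simpa using hm

lemma dom_comp (l : Fin r → Γ) (f : Fin n → Fin r × ℕ) (ρ : Equiv.Perm (Fin n)) :
    Dom l (f ∘ ρ) f :=
  fun k J => ⟨J, le_rfl, (card_cntSet_comp l f ρ k J).ge⟩

lemma dom_comp' (l : Fin r → Γ) (f : Fin n → Fin r × ℕ) (ρ : Equiv.Perm (Fin n)) :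
    Dom l f (f ∘ ρ) :=
  fun k J => ⟨J, le_rfl, (card_cntSet_comp l f ρ k J).le⟩

end RowFunctions

section RowElements

variable {R : Type*} [CommRing R] {A : Type*} [Ring A] [Algebra R A]
  {n : ℕ} {W : Type*} [Ring W] [Algebra R W]

/-- The sum of a set of permutations inside the wreath product. -/
noncomputable def pSum (φ : ((⨂[R] _ : Fin n, A) ⊗[R] (Equiv.Perm (Fin n) →₀ R)) ≃ₗ[R] W)
    (Ω : Finset (Equiv.Perm (Fin n))) : W := ∑ σ ∈ Ω, sElt φ σ

variable {Γ : Type*} [PartialOrder Γ] {T : Γ → Type*} {r : ℕ}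

/-- The element `y^α x_λ` attached to a row function. -/
noncomputable def yx (φ : ((⨂[R] _ : Fin n, A) ⊗[R] (Equiv.Perm (Fin n) →₀ R)) ≃ₗ[R] W)
    (y : Γ → A) (l : Fin r → Γ) (f : Fin n → Fin r × ℕ) : W :=
  wm φ (fun i => y (l (f i).1)) 1 * pSum φ (stab f)

/-- The two-sided ideal generated by the elements attached to strictly dominating row
functions. -/
noncomputable def domIdeal
    (φ : ((⨂[R] _ : Fin n, A) ⊗[R] (Equiv.Perm (Fin n) →₀ R)) ≃ₗ[R] W)
    (y : Γ → A) (l : Fin r → Γ) (f : Fin n → Fin r × ℕ) : Submodule R W :=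
  Submodule.span R {x | ∃ (g : Fin n → Fin r × ℕ) (a b : W), SDom l g f ∧ x = a * yx φ y l g * b}

variable {φ : ((⨂[R] _ : Fin n, A) ⊗[R] (Equiv.Perm (Fin n) →₀ R)) ≃ₗ[R] W}
    {star : A →ₗ[R] A} {starW : W →ₗ[R] W} {y : Γ → A} {vv : ∀ γ, T γ → A} {l : Fin r → Γ}

lemma mul_yx_mul_mem {f g : Fin n → Fin r × ℕ} (h : SDom l g f) (a b : W) :
    a * yx φ y l g * b ∈ domIdeal φ y l f := Submodule.subset_span ⟨g, a, b, h, rfl⟩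

lemma mul_mem_domIdeal {f : Fin n → Fin r × ℕ} {x : W} (hx : x ∈ domIdeal φ y l f) (a : W) :
    a * x ∈ domIdeal φ y l f := by
  induction hx using Submodule.span_induction with
  | mem x h =>
    obtain ⟨g, a', b, hg, rfl⟩ := h
    rw [mul_assoc a', ← mul_assoc, ← mul_assoc]
    exact mul_yx_mul_mem hg _ _
  | zero => simp
  | add x z _ _ hx hz => rw [mul_add]; exact add_mem hx hz
  | smul c x _ hx => rw [mul_smul_comm]; exact Submodule.smul_mem _ _ hx

lemma mem_mul_domIdeal {f : Fin n → Fin r × ℕ} {x : W} (hx : x ∈ domIdeal φ y l f) (a : W) :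
    x * a ∈ domIdeal φ y l f := by
  induction hx using Submodule.span_induction with
  | mem x h =>
    obtain ⟨g, a', b, hg, rfl⟩ := h
    rw [mul_assoc]
    exact mul_yx_mul_mem hg _ _
  | zero => simp
  | add x z _ _ hx hz => rw [add_mul]; exact add_mem hx hz
  | smul c x _ hx => rw [smul_mul_assoc]; exact Submodule.smul_mem _ _ hx

lemma domIdeal_mono {f g : Fin n → Fin r × ℕ} (h : Dom l g f) :
    domIdeal φ y l g ≤ domIdeal φ y l f :=
  Submodule.span_mono fun _ ⟨g', a, b, h', hx⟩ => ⟨g', a, b, h'.trans_dom h, hx⟩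

omit [PartialOrder Γ] in
lemma yx_congr {f g : Fin n → Fin r × ℕ} (h1 : ∀ i, (f i).1 = (g i).1)
    (h2 : ∀ i j, f i = f j ↔ g i = g j) : yx φ y l f = yx φ y l g := by
  have : stab f = stab g := by ext σ; simp [mem_stab, h2]
  simp [yx, h1, this]

namespace IsWreath

variable (hw : IsWreath φ star starW)
include hw

lemma sElt_mul_pSum_stab {α : Type*} (f : Fin n → α) (ρ : Equiv.Perm (Fin n)) :
    sElt φ ρ * pSum φ (stab f) = pSum φ (stab (f ∘ ⇑ρ⁻¹)) * sElt φ ρ := by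
  simp only [pSum, Finset.sum_mul, Finset.mul_sum, hw.sElt_mul]
  refine Finset.sum_bij' (fun τ _ => ρ * τ * ρ⁻¹) (fun τ _ => ρ⁻¹ * τ * ρ)
    (fun τ hτ => ?_) (fun τ hτ => ?_) ?_ ?_ ?_
  · rw [mem_stab] at *; intro i; simp [hτ]
  · rw [mem_stab] at *; intro i; simpa using hτ (ρ i)
  · intro τ _; group
  · intro τ _; group
  · intro τ _; congr 1; group

omit [PartialOrder Γ] in
lemma sElt_mul_yx (f : Fin n → Fin r × ℕ) (ρ : Equiv.Perm (Fin n)) :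
    sElt φ ρ * yx φ y l f = yx φ y l (f ∘ ⇑ρ⁻¹) * sElt φ ρ := by
  rw [yx, ← mul_assoc, hw.sElt_mul_wm, mul_assoc, hw.sElt_mul_pSum_stab, ← mul_assoc]
  rfl

lemma pSum_stab_mul_wm {α : Type*} (f : Fin n → α) (a : Fin n → A)
    (ha : ∀ σ ∈ stab f, ∀ i, a (σ i) = a i) :
    pSum φ (stab f) * wm φ a 1 = wm φ a 1 * pSum φ (stab f) := by
  simp only [pSum, Finset.sum_mul, Finset.mul_sum]
  refine Finset.sum_congr rfl fun σ hσ => ?_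
  rw [hw.sElt_mul_wm]
  simp only [ha _ (inv_mem_stab hσ)]

lemma exists_pSum_eq {α : Type*} (f : Fin n → α) (Ω : Finset (Equiv.Perm (Fin n)))
    (hΩ : ∀ σ ∈ stab f, ∀ ω ∈ Ω, σ * ω ∈ Ω) : ∃ h : W, pSum φ Ω = pSum φ (stab f) * h := by
  induction hc : Ω.card using Nat.strong_induction_on generalizing Ω with
  | _ N ih =>
    rcases Ω.eq_empty_or_nonempty with rfl | ⟨ω, hω⟩
    · exact ⟨0, by simp [pSum]⟩
    · set C := (stab f).image (· * ω) with hC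
      have hCΩ : C ⊆ Ω := by
        intro τ hτ
        obtain ⟨σ, hσ, rfl⟩ := Finset.mem_image.1 hτ
        exact hΩ σ hσ ω hω
      have hωC : ω ∈ C := Finset.mem_image.2 ⟨1, by simp [mem_stab], by simp⟩
      obtain ⟨h, hh⟩ := ih (Ω \ C).card
        (hc ▸ Finset.card_lt_card (Finset.sdiff_ssubset hCΩ ⟨ω, hωC⟩)) (Ω \ C)
        (fun σ hσ τ hτ => by
          rw [Finset.mem_sdiff] at *
          refine ⟨hΩ σ hσ τ hτ.1, fun hmem => hτ.2 ?_⟩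
          obtain ⟨ρ, hρ, he⟩ := Finset.mem_image.1 hmem
          refine Finset.mem_image.2 ⟨σ⁻¹ * ρ, mul_mem_stab (inv_mem_stab hσ) hρ, ?_⟩
          simp only [mul_assoc, he]
          group) rfl
      have hC' : pSum φ C = pSum φ (stab f) * sElt φ ω := by
        simp only [pSum, Finset.sum_mul, hw.sElt_mul, hC]
        rw [Finset.sum_image fun _ _ _ _ h => mul_right_cancel h]
      refine ⟨h + sElt φ ω, ?_⟩
      rw [mul_add, ← hh, ← hC']
      exact (Finset.sum_sdiff hCΩ).symm

end IsWreath

/-- Stabilizers of finer row functions divide. -/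
lemma IsWreath.exists_pSum_stab_eq (hw : IsWreath φ star starW) {α β : Type*} (f : Fin n → α)
    (g : Fin n → β)
    (h : stab g ⊆ stab f) : ∃ z : W, pSum φ (stab f) = pSum φ (stab g) * z :=
  hw.exists_pSum_eq g _ fun _ hσ _ hω => mul_mem_stab (h hσ) hω

end RowElements

section Straightening

variable {R : Type*} [CommRing R] {A : Type*} [Ring A] [Algebra R A]
  {n : ℕ} {W : Type*} [Ring W] [Algebra R W]
  {φ : ((⨂[R] _ : Fin n, A) ⊗[R] (Equiv.Perm (Fin n) →₀ R)) ≃ₗ[R] W}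
  {Γ : Type*} [PartialOrder Γ] {T : Γ → Type*} {r : ℕ}
  {star : A →ₗ[R] A} {starW : W →ₗ[R] W} {y : Γ → A} {vv : ∀ γ, T γ → A} {l : Fin r → Γ}

/-- The span of the elements `u * y (l k)` and the elements above `k`. -/
def leftSpan (R : Type*) [CommRing R] {A : Type*} [Ring A] [Algebra R A] {Γ : Type*}
    [PartialOrder Γ] (y : Γ → A) {r : ℕ} (l : Fin r → Γ) (k : Fin r) : Submodule R A :=
  Submodule.span R ({x | ∃ u : A, x = u * y (l k)} ∪
    {x | ∃ (k' : Fin r) (u w : A), l k < l k' ∧ x = u * y (l k') * w})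

lemma aboveSpan_le_leftSpan (k : Fin r) : aboveSpan R y l k ≤ leftSpan R y l k :=
  Submodule.span_mono Set.subset_union_right

lemma mul_y_mem_leftSpan (k : Fin r) (u : A) : u * y (l k) ∈ leftSpan R y l k :=
  Submodule.subset_span (Or.inl ⟨u, rfl⟩)

/-- Raising the components of the positions in `Z` gives a strictly dominating row function. -/
lemma sDom_raise {f : Fin n → Fin r × ℕ} {β : Fin n → Fin r} {ρ : Fin n → ℕ} {Z : Finset (Fin n)}
    (hZ : Z.Nonempty) (h : ∀ i ∈ Z, l (f i).1 < l (β i)) :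
    SDom l (fun i => if i ∈ Z then (β i, ρ i) else f i) f := by
  refine ⟨fun k J => ⟨J, le_rfl, Finset.card_le_card fun m hm => ?_⟩, fun hd => ?_⟩
  · rw [mem_cntSet] at *
    by_cases hmZ : m ∈ Z
    · simp only [hmZ, if_true]
      left
      rcases hm with hm | hm
      · exact hm.trans (h m hmZ)
      · exact hm.1 ▸ h m hmZ
    · simpa only [hmZ, if_false] using hm
  · obtain ⟨i0, hi0⟩ := hZ
    obtain ⟨J', hJ', hle⟩ := hd (f i0).1 ∅
    obtain rfl : J' = ∅ := by simpa using hJ'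
    refine absurd hle (not_le.2 (Finset.card_lt_card ⟨fun m hm => ?_, fun hsub => ?_⟩))
    · rw [mem_cntSet] at *
      by_cases hmZ : m ∈ Z
      · simp only [hmZ, if_true]
        left
        simp only [Finset.notMem_empty, and_false, or_false] at hm
        exact hm.trans (h m hmZ)
      · simpa only [hmZ, if_false] using hm
    · have := hsub (x := i0) (by rw [mem_cntSet]; simp [hi0, h i0 hi0])
      rw [mem_cntSet] at this
      simp at this

namespace IsWreath

variable (hw : IsWreath φ star starW)
include hw

lemma wm_mul_pSum_mem_of_raise (f : Fin n → Fin r × ℕ) (u w : Fin n → A) (β : Fin n → Fin r)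
    (Z : Finset (Fin n)) (hZ : Z.Nonempty) (h1 : ∀ i ∈ Z, l (f i).1 < l (β i))
    (h2 : ∀ i ∉ Z, β i = (f i).1 ∧ w i = 1) :
    wm φ (fun i => u i * y (l (β i)) * w i) 1 * pSum φ (stab f) ∈ domIdeal φ y l f := by
  set N := (Finset.univ.sup fun i => (f i).2) + 1 with hN
  have hNf : ∀ i, (f i).2 < N := fun i =>
    Nat.lt_succ_of_le (Finset.le_sup (f := fun i => (f i).2) (Finset.mem_univ i))
  set f' : Fin n → Fin r × ℕ := fun i => if i ∈ Z then (β i, N + i) else f i with hf'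
  have hfix : ∀ σ ∈ stab f', ∀ i ∈ Z, σ i = i := by
    intro σ hσ i hi
    have := mem_stab.1 hσ i
    simp only [hf', hi, if_true] at this
    by_cases hσi : σ i ∈ Z
    · simp only [hσi, if_true, Prod.mk.injEq] at this
      exact Fin.ext (by omega)
    · simp only [hσi, if_false] at this
      have h3 := hNf (σ i)
      rw [this] at h3
      simp at h3
  have hnot : ∀ σ ∈ stab f', ∀ i ∉ Z, σ i ∉ Z := by
    intro σ hσ i hi hmem
    have := hfix σ hσ _ hmem
    exact hi (σ.injective this ▸ hmem)
  have hsub : stab f' ⊆ stab f := by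
    intro σ hσ
    refine mem_stab.2 fun i => ?_
    by_cases hi : i ∈ Z
    · rw [hfix σ hσ i hi]
    · have := mem_stab.1 hσ i
      simpa only [hf', hi, hnot σ hσ i hi, if_false] using this
  obtain ⟨z, hz⟩ := hw.exists_pSum_stab_eq f f' hsub
  have hcomm := hw.pSum_stab_mul_wm f' w (by
    intro σ hσ i
    by_cases hi : i ∈ Z
    · rw [hfix σ hσ i hi]
    · rw [(h2 i hi).2, (h2 _ (hnot σ hσ i hi)).2])
  have hβ : (fun i => y (l (β i))) = fun i => y (l (f' i).1) := by
    funext i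
    by_cases hi : i ∈ Z
    · simp [hf', hi]
    · simp [hf', hi, (h2 i hi).1]
  have : wm φ (fun i => u i * y (l (β i)) * w i) 1 * pSum φ (stab f) =
      wm φ u 1 * yx φ y l f' * (wm φ w 1 * z) := by
    rw [hz, ← hw.wm_one_mul (fun i => u i * y (l (β i))) w, ← hw.wm_one_mul u, hβ, yx]
    simp only [mul_assoc]
    rw [← mul_assoc _ (wm φ w 1) z, hcomm]
    simp only [mul_assoc]
  rw [this]
  exact mul_yx_mul_mem (sDom_raise hZ h1) _ _

lemma wm_mul_pSum_mem (f : Fin n → Fin r × ℕ) (a : Fin n → A)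
    (ha : ∀ i, a i ∈ leftSpan R y l (f i).1) (i0 : Fin n)
    (hi0 : a i0 ∈ aboveSpan R y l (f i0).1) :
    wm φ a 1 * pSum φ (stab f) ∈ domIdeal φ y l f := by
  set S : Fin n → Set A := fun i =>
    {x | (i ≠ i0 ∧ ∃ u : A, x = u * y (l (f i).1)) ∨
      ∃ (k' : Fin r) (u w : A), l (f i).1 < l k' ∧ x = u * y (l k') * w} with hS
  refine ((LinearMap.mulRight R (pSum φ (stab f))).compMultilinearMap
    (wmM φ 1)).mem_of_forall_mem_span S _ ?_ a ?_
  · intro s hs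
    have h1 : ∀ i, ∃ (b : Fin r) (u w : A), s i = u * y (l b) * w ∧
        ((i ≠ i0 ∧ b = (f i).1 ∧ w = 1) ∨ l (f i).1 < l b) := by
      intro i
      rcases hs i with ⟨hi, u, hu⟩ | ⟨k', u, w, hk, hx⟩
      · exact ⟨_, u, 1, by simpa using hu, Or.inl ⟨hi, rfl, rfl⟩⟩
      · exact ⟨k', u, w, hx, Or.inr hk⟩
    choose b u w hsi hb using h1
    have := hw.wm_mul_pSum_mem_of_raise (y := y) (l := l) f u w b
      (Finset.univ.filter fun i => l (f i).1 < l (b i))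
      ⟨i0, by simpa using (hb i0)⟩ (by simp) (fun i hi => by
        have h3 := hb i
        simp only [Finset.mem_filter, Finset.mem_univ, true_and] at hi
        rcases h3 with h3 | h3
        · exact h3.2
        · exact absurd h3 hi)
    rw [← funext hsi] at this
    exact this
  · intro i
    by_cases hi : i = i0
    · subst hi
      refine Submodule.span_mono ?_ hi0
      exact fun x hx => Or.inr hx
    · refine Submodule.span_mono ?_ (ha i)
      rintro x (hx | hx)
      · exact Or.inl ⟨hi, hx⟩
      · exact Or.inr hx

/-- Changing tensor factors modulo higher terms. -/
lemma wm_sub_mul_pSum_mem (f : Fin n → Fin r × ℕ) (a b : Fin n → A)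
    (hb : ∀ i, b i ∈ leftSpan R y l (f i).1)
    (hab : ∀ i, a i - b i ∈ aboveSpan R y l (f i).1) :
    wm φ a 1 * pSum φ (stab f) - wm φ b 1 * pSum φ (stab f) ∈ domIdeal φ y l f := by
  have ha : ∀ i, a i ∈ leftSpan R y l (f i).1 := fun i => by
    simpa using add_mem (aboveSpan_le_leftSpan _ (hab i)) (hb i)
  have key : ∀ s : Finset (Fin n), wm φ (s.piecewise a b) 1 * pSum φ (stab f) -
      wm φ b 1 * pSum φ (stab f) ∈ domIdeal φ y l f := by
    intro s
    induction s using Finset.induction_on with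
    | empty => simp
    | insert i s hi ih =>
      have h1 : wm φ ((insert i s).piecewise a b) 1 - wm φ (s.piecewise a b) 1 =
          wm φ (Function.update (s.piecewise a b) i (a i - b i)) 1 := by
        have := (wmM φ 1).map_update_sub (s.piecewise a b) i (a i) (b i)
        simp only [wmM_apply] at this
        rw [this, Finset.piecewise_insert]
        congr 2
        conv_lhs => rw [← Function.update_eq_self i (s.piecewise a b)]
        simp [hi]
      have h2 : wm φ (Function.update (s.piecewise a b) i (a i - b i)) 1 * pSum φ (stab f) ∈
          domIdeal φ y l f := by
        refine hw.wm_mul_pSum_mem f _ (fun j => ?_) i (by simpa using hab i)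
        by_cases hj : j = i
        · subst hj
          simpa using aboveSpan_le_leftSpan _ (hab j)
        · rw [Function.update_of_ne hj]
          by_cases hjs : j ∈ s
          · simpa [hjs] using ha j
          · simpa [hjs] using hb j
      rw [← h1, sub_mul] at h2
      simpa using add_mem h2 ih
  simpa using key Finset.univ

/-- Straightening of tensors against `y^α x_λ`. -/
lemma wm_mul_yx_mem (hc : CyclicCellular star y vv l) (f : Fin n → Fin r × ℕ) (a : Fin n → A) :
    wm φ a 1 * yx φ y l f ∈ Submodule.span R (Set.range fun τ : ∀ i, T (l (f i).1) =>
      wm φ (fun i => vv _ (τ i)) 1 * yx φ y l f) ⊔ domIdeal φ y l f := by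
  choose b hb hab using fun i => hc.mul_y (f i).1 (a i)
  have hb' : ∀ i, b i ∈ leftSpan R y l (f i).1 := fun i => by
    refine Submodule.span_le.2 ?_ (hb i)
    rintro _ ⟨t, rfl⟩
    exact mul_y_mem_leftSpan _ _
  have h1 := hw.wm_sub_mul_pSum_mem f _ b hb' hab
  have h2 : wm φ b 1 * pSum φ (stab f) ∈ Submodule.span R
      (Set.range fun τ : ∀ i, T (l (f i).1) => wm φ (fun i => vv _ (τ i)) 1 * yx φ y l f) := by
    refine ((LinearMap.mulRight R (pSum φ (stab f))).compMultilinearMap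
      (wmM φ 1)).mem_of_forall_mem_span _ _ ?_ b hb
    intro s hs
    choose τ hτ using hs
    refine Submodule.subset_span ⟨τ, ?_⟩
    simp only [yx]
    rw [← mul_assoc, hw.wm_one_mul]
    exact congrArg (fun s => wm φ s 1 * pSum φ (stab f)) (funext hτ)
  rw [yx, ← mul_assoc, hw.wm_one_mul]
  exact (Submodule.sub_mem_iff_left _ (Submodule.mem_sup_left h2)).1 (Submodule.mem_sup_right h1)

lemma starW_yx_sub_mem (hc : CyclicCellular star y vv l) (f : Fin n → Fin r × ℕ) :
    starW (yx φ y l f) - yx φ y l f ∈ domIdeal φ y l f := by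
  have h1 : starW (pSum φ (stab f)) = pSum φ (stab f) := by
    simp only [pSum, map_sum, hw.starW_sElt hc.star_mul hc.star_star]
    exact Finset.sum_bij' (fun σ _ => σ⁻¹) (fun σ _ => σ⁻¹) (fun _ h => inv_mem_stab h)
      (fun _ h => inv_mem_stab h) (by simp) (by simp) (by simp)
  have h2 : starW (yx φ y l f) =
      wm φ (fun i => star (y (l (f i).1))) 1 * pSum φ (stab f) := by
    rw [yx, hw.starW_mul hc.star_mul, h1, hw.starW_wm]
    refine hw.pSum_stab_mul_wm f _ fun σ hσ i => ?_
    simp [mem_stab.1 hσ i]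
  rw [h2]
  exact hw.wm_sub_mul_pSum_mem f _ _ (fun i => by
    simpa using mul_y_mem_leftSpan (R := R) (y := y) (l := l) (f i).1 1)
    fun i => hc.star_y _

lemma starW_mem_domIdeal (hc : CyclicCellular star y vv l) {f : Fin n → Fin r × ℕ} {x : W}
    (hx : x ∈ domIdeal φ y l f) : starW x ∈ domIdeal φ y l f := by
  induction hx using Submodule.span_induction with
  | mem x h =>
    obtain ⟨g, a, b, hg, rfl⟩ := h
    rw [hw.starW_mul hc.star_mul, hw.starW_mul hc.star_mul, ← mul_assoc]
    refine mem_mul_domIdeal (mul_mem_domIdeal ?_ _) _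
    have h1 := domIdeal_mono hg.1 (hw.starW_yx_sub_mem hc g)
    have h2 := mul_yx_mul_mem (φ := φ) (y := y) hg 1 1
    simpa using add_mem h1 h2
  | zero => simp
  | add x z _ _ hx hz => rw [map_add]; exact add_mem hx hz
  | smul c x _ hx => rw [map_smul]; exact Submodule.smul_mem _ _ hx

end IsWreath

end Straightening

/-! ### Garnir relations -/

lemma Antitone.sum_le_sum_range_card {F : ℕ → ℕ} (hF : Antitone F) (J : Finset ℕ) :
    ∑ a ∈ J, F a ≤ ∑ a ∈ Finset.range J.card, F a := by
  induction J using Finset.induction_on_max with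
  | empty => simp
  | insert m s hs ih =>
    have hm : m ∉ s := fun h => lt_irrefl _ (hs m h)
    have hc : s.card ≤ m := by
      simpa using Finset.card_le_card (t := Finset.range m) fun x hx => by simpa using hs x hx
    rw [Finset.sum_insert hm, Finset.card_insert_of_notMem hm, Finset.sum_range_succ, add_comm]
    exact add_le_add ih (hF hc)

section Rows

variable {Γ : Type*} [PartialOrder Γ] {r n : ℕ}

/-- The positions in a given row. -/
noncomputable def rowSet (f : Fin n → Fin r × ℕ) (c : Fin r × ℕ) : Finset (Fin n) :=
  Finset.univ.filter fun m => f m = c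

lemma mem_rowSet {f : Fin n → Fin r × ℕ} {c : Fin r × ℕ} {m : Fin n} :
    m ∈ rowSet f c ↔ f m = c := by simp [rowSet]

/-- The row lengths weakly decrease within every component. -/
def RowsAntitone (f : Fin n → Fin r × ℕ) : Prop :=
  ∀ k, Antitone fun a => (rowSet f (k, a)).card

lemma card_rowSet_comp (f : Fin n → Fin r × ℕ) (ρ : Equiv.Perm (Fin n)) (c : Fin r × ℕ) :
    (rowSet (f ∘ ρ) c).card = (rowSet f c).card := by
  refine Finset.card_bij (fun m _ => ρ m) (fun m hm => ?_) (fun _ _ _ _ h => ρ.injective h)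
    fun m hm => ⟨ρ⁻¹ m, ?_, by simp⟩
  · rw [mem_rowSet] at *; exact hm
  · rw [mem_rowSet] at *; simpa using hm

lemma RowsAntitone.comp {f : Fin n → Fin r × ℕ} (hf : RowsAntitone f) (ρ : Equiv.Perm (Fin n)) :
    RowsAntitone (f ∘ ρ) := fun k => by
  simp only [card_rowSet_comp]
  exact hf k

lemma card_cntSet (l : Fin r → Γ) (f : Fin n → Fin r × ℕ) (k : Fin r) (J : Finset ℕ) :
    (cntSet l f k J).card = (cntSet l f k ∅).card + ∑ a ∈ J, (rowSet f (k, a)).card := by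
  induction J using Finset.induction_on with
  | empty => simp
  | insert a J ha ih =>
    rw [Finset.sum_insert ha, add_left_comm, ← ih, add_comm, ← Finset.card_union_of_disjoint]
    · congr 1
      ext m
      simp only [Finset.mem_union, mem_cntSet, mem_rowSet, Finset.mem_insert, Prod.ext_iff]
      tauto
    · rw [Finset.disjoint_left]
      intro m h1 h2
      rw [mem_cntSet] at h1
      rw [mem_rowSet] at h2
      rw [h2] at h1
      simp [ha] at h1

lemma RowsAntitone.card_cntSet_le {f : Fin n → Fin r × ℕ} (hf : RowsAntitone f) (l : Fin r → Γ)
    (k : Fin r) (J : Finset ℕ) :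
    (cntSet l f k J).card ≤ (cntSet l f k (Finset.range J.card)).card := by
  rw [card_cntSet, card_cntSet l f k (Finset.range _)]
  exact Nat.add_le_add_left ((hf k).sum_le_sum_range_card J) _

lemma cntSet_subset_of_subset (l : Fin r → Γ) (f : Fin n → Fin r × ℕ) (k : Fin r) {J J' : Finset ℕ}
    (h : J ⊆ J') : cntSet l f k J ⊆ cntSet l f k J' := by
  intro m
  simp only [mem_cntSet]
  exact Or.imp_right fun hm => ⟨hm.1, h hm.2⟩

/-- Moving most of two adjacent rows into the upper one strictly raises the row function. -/
lemma RowsAntitone.sDom_merge {g : Fin n → Fin r × ℕ} (hg : RowsAntitone g) (l : Fin r → Γ)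
    (k : Fin r) (i : ℕ) (Q : Finset (Fin n)) (hQ : Q ⊆ rowSet g (k, i) ∪ rowSet g (k, i + 1))
    (hcard : Q.card < (rowSet g (k, i + 1)).card) :
    SDom l (fun m => if m ∈ Q then (k, i + 1) else
      if g m = (k, i) ∨ g m = (k, i + 1) then (k, i) else g m) g := by
  set ν : Fin n → Fin r × ℕ := fun m => if m ∈ Q then (k, i + 1) else
      if g m = (k, i) ∨ g m = (k, i + 1) then (k, i) else g m with hν
  have hU : ∀ m ∈ Q, g m = (k, i) ∨ g m = (k, i + 1) := fun m hm => by
    simpa [mem_rowSet] using hQ hm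
  have hfst : ∀ m, (ν m).1 = (g m).1 := by
    intro m
    simp only [hν]
    split_ifs with h1 h2
    · rcases hU m h1 with h | h <;> rw [h]
    · rcases h2 with h | h <;> rw [h]
    · rfl
  have hsnd : ∀ m, ¬(g m = (k, i) ∨ g m = (k, i + 1)) → ν m = g m := by
    intro m hm
    simp only [hν, hm, if_false]
    exact if_neg fun h => hm (hU m h)
  have hrow : ∀ m, g m = (k, i) ∨ g m = (k, i + 1) →
      ν m = (k, i) ∨ ν m = (k, i + 1) := by
    intro m hm
    simp only [hν, hm, if_true]
    split_ifs <;> simp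
  have hkey : (cntSet l g k (Finset.range (i + 1))).card <
      (cntSet l ν k (Finset.range (i + 1))).card := by
    have h1 : cntSet l g k (Finset.range (i + 1)) = cntSet l g k (Finset.range i) ∪
        rowSet g (k, i) := by
      ext m
      simp only [Finset.mem_union, mem_cntSet, mem_rowSet, Finset.mem_range, Prod.ext_iff,
        Nat.lt_succ_iff_lt_or_eq]
      tauto
    have hdisj : Disjoint (cntSet l g k (Finset.range i))
        (rowSet g (k, i) ∪ rowSet g (k, i + 1)) := by
      rw [Finset.disjoint_left]
      intro m hm hm'
      rw [mem_cntSet] at hm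
      simp only [Finset.mem_union, mem_rowSet] at hm'
      rcases hm' with h | h <;> simp [h] at hm
    have h2 : cntSet l g k (Finset.range i) ∪
        ((rowSet g (k, i) ∪ rowSet g (k, i + 1)) \ Q) ⊆ cntSet l ν k (Finset.range (i + 1)) := by
      intro m
      simp only [Finset.mem_union, Finset.mem_sdiff, mem_cntSet, mem_rowSet, Finset.mem_range]
      rintro (hm | hm)
      · by_cases hm' : g m = (k, i) ∨ g m = (k, i + 1)
        · rcases hm' with h | h <;> simp [h] at hm
        · rw [hsnd m hm']
          exact hm.imp_right fun h => ⟨h.1, h.2.trans (Nat.lt_succ_self _)⟩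
      · right
        have : ν m = (k, i) := by simp [hν, hm.2, hm.1]
        simp [this]
    refine lt_of_lt_of_le ?_ (Finset.card_le_card h2)
    rw [h1, Finset.card_union_of_disjoint (hdisj.mono_right Finset.subset_union_left),
      Finset.card_union_of_disjoint (hdisj.mono_right Finset.sdiff_subset),
      Finset.card_sdiff_of_subset hQ, Finset.card_union_of_disjoint]
    · omega
    · rw [Finset.disjoint_left]
      intro m h1 h2
      rw [mem_rowSet] at *
      simp [h1] at h2
  refine ⟨fun k' J => ?_, fun hd => ?_⟩
  · by_cases hk : k' = k
    · subst hk
      refine ⟨Finset.range J.card, by simp, (hg.card_cntSet_le l k' J).trans ?_⟩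
      by_cases hj : J.card = i + 1
      · rw [hj]; exact hkey.le
      · refine Finset.card_le_card fun m => ?_
        simp only [mem_cntSet, hfst, Finset.mem_range]
        refine Or.imp_right fun h => ⟨h.1, ?_⟩
        by_cases hm' : g m = (k', i) ∨ g m = (k', i + 1)
        · have h2 := h.2
          rcases hm' with h' | h' <;> rcases hrow m (by tauto) with h'' | h'' <;>
            rw [h''] <;> rw [h'] at h2 <;> dsimp only at * <;> omega
        · rw [hsnd m hm']; exact h.2
    · refine ⟨J, le_rfl, Finset.card_le_card fun m => ?_⟩
      simp only [mem_cntSet, hfst]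
      refine Or.imp_right fun h => ⟨h.1, ?_⟩
      rw [hsnd m]
      · exact h.2
      · rintro (h' | h') <;> rw [h'] at h <;> exact hk h.1.symm
  · obtain ⟨J', hJ', hle⟩ := hd k (Finset.range (i + 1))
    refine absurd (hle.trans ((hg.card_cntSet_le l k J').trans
      (Finset.card_le_card (cntSet_subset_of_subset l g k ?_)))) (not_le.2 hkey)
    intro a
    simp only [Finset.mem_range, Finset.card_range] at *
    omega

/-- Row functions agreeing with `g` off the rows `(k, i)` and `(k, i + 1)`, permuting these rows,
and placing `P` in the upper and `Q` in the lower row. -/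
def Garnir (g : Fin n → Fin r × ℕ) (k : Fin r) (i : ℕ) (P Q : Finset (Fin n))
    (g' : Fin n → Fin r × ℕ) : Prop :=
  (∀ m, ¬(g m = (k, i) ∨ g m = (k, i + 1)) → g' m = g m) ∧
  (∀ m, (g m = (k, i) ∨ g m = (k, i + 1)) → (g' m = (k, i) ∨ g' m = (k, i + 1))) ∧
  (∀ m ∈ P, g' m = (k, i)) ∧ ∀ m ∈ Q, g' m = (k, i + 1)

lemma Garnir.fst_eq {g g' : Fin n → Fin r × ℕ} {k : Fin r} {i : ℕ} {P Q : Finset (Fin n)}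
    (h : Garnir g k i P Q g') (m : Fin n) : (g' m).1 = (g m).1 := by
  by_cases hm : g m = (k, i) ∨ g m = (k, i + 1)
  · have h' := h.2.1 m hm
    rcases hm with hm | hm <;> rcases h' with h' | h' <;> rw [hm, h']
  · rw [h.1 m hm]

/-- Every initial segment meets an upper row at least as often as the next one. -/
def Ballot (g : Fin n → Fin r × ℕ) : Prop :=
  ∀ (k : Fin r) (i : ℕ) (θ : Fin n), ((rowSet g (k, i + 1)).filter (· ≤ θ)).card ≤
    ((rowSet g (k, i)).filter (· ≤ θ)).card

lemma Garnir.weight_lt {g g' : Fin n → Fin r × ℕ} {k : Fin r} {i : ℕ} {θ : Fin n}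
    (h : Garnir g k i ((rowSet g (k, i)).filter (· ≤ θ))
      ((rowSet g (k, i + 1)).filter fun m => ¬ m ≤ θ) g')
    (hsum : ∑ m, (g' m).2 = ∑ m, (g m).2) (hne : g' ≠ g) :
    ∑ m : Fin n, (m : ℕ) * (g m).2 < ∑ m : Fin n, (m : ℕ) * (g' m).2 := by
  have h1 : ∀ m : Fin n,
      0 ≤ (2 * (m : ℤ) - 2 * (θ : ℤ) - 1) * (((g' m).2 : ℤ) - ((g m).2 : ℤ)) ∧
      (g' m ≠ g m →
        0 < (2 * (m : ℤ) - 2 * (θ : ℤ) - 1) * (((g' m).2 : ℤ) - ((g m).2 : ℤ))) := by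
    intro m
    by_cases hm : g m = (k, i) ∨ g m = (k, i + 1)
    · by_cases hθ : m ≤ θ
      · have hθ' : (m : ℕ) ≤ θ := hθ
        rcases hm with hm | hm
        · have := h.2.2.1 m (by simp [mem_rowSet, hm, hθ])
          simp [this, hm]
        · rcases h.2.1 m (Or.inr hm) with h' | h'
          · have : 0 < (2 * (m : ℤ) - 2 * (θ : ℤ) - 1) * (((g' m).2 : ℤ) - ((g m).2 : ℤ)) := by
              rw [h', hm]; push_cast; nlinarith
            exact ⟨this.le, fun _ => this⟩
          · simp [h', hm]
      · have hθ' : (θ : ℕ) < m := not_le.1 hθ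
        rcases hm with hm | hm
        · rcases h.2.1 m (Or.inl hm) with h' | h'
          · simp [h', hm]
          · have : 0 < (2 * (m : ℤ) - 2 * (θ : ℤ) - 1) * (((g' m).2 : ℤ) - ((g m).2 : ℤ)) := by
              rw [h', hm]; push_cast; nlinarith
            exact ⟨this.le, fun _ => this⟩
        · have := h.2.2.2 m (by simpa [mem_rowSet, hm] using hθ)
          simp [this, hm]
    · simp [h.1 m hm]
  obtain ⟨m0, hm0⟩ : ∃ m, g' m ≠ g m := by
    by_contra! hcon
    exact hne (funext hcon)
  have h2 : 0 < ∑ m : Fin n,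
      (2 * (m : ℤ) - 2 * (θ : ℤ) - 1) * (((g' m).2 : ℤ) - ((g m).2 : ℤ)) :=
    Finset.sum_pos' (fun m _ => (h1 m).1) ⟨m0, Finset.mem_univ _, (h1 m0).2 hm0⟩
  have hsum' : ∑ m, ((g' m).2 : ℤ) = ∑ m, ((g m).2 : ℤ) := by exact_mod_cast hsum
  have h3 : ∑ m : Fin n,
      (2 * (m : ℤ) - 2 * (θ : ℤ) - 1) * (((g' m).2 : ℤ) - ((g m).2 : ℤ)) =
      2 * (∑ m : Fin n, (m : ℤ) * ((g' m).2 : ℤ) - ∑ m : Fin n, (m : ℤ) * ((g m).2 : ℤ)) -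
      (2 * (θ : ℤ) + 1) * (∑ m, ((g' m).2 : ℤ) - ∑ m, ((g m).2 : ℤ)) := by
    rw [← Finset.sum_sub_distrib, ← Finset.sum_sub_distrib, Finset.mul_sum, Finset.mul_sum,
      ← Finset.sum_sub_distrib]
    exact Finset.sum_congr rfl fun m _ => by ring
  rw [h3, hsum'] at h2
  zify
  linarith

end Rows

section GarnirElements

variable {R : Type*} [CommRing R] {A : Type*} [Ring A] [Algebra R A]
  {n : ℕ} {W : Type*} [Ring W] [Algebra R W]
  {φ : ((⨂[R] _ : Fin n, A) ⊗[R] (Equiv.Perm (Fin n) →₀ R)) ≃ₗ[R] W}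
  {Γ : Type*} [PartialOrder Γ] {r : ℕ}
  {star : A →ₗ[R] A} {starW : W →ₗ[R] W} {y : Γ → A} {l : Fin r → Γ}

/-- The permutations moving `f` into a set of row functions. -/
noncomputable def movers {n : ℕ} {α : Type*} (f : Fin n → α) (𝒢 : (Fin n → α) → Prop) :
    Finset (Equiv.Perm (Fin n)) := Finset.univ.filter fun σ => 𝒢 (f ∘ ⇑σ⁻¹)

lemma mem_movers {n : ℕ} {α : Type*} {f : Fin n → α} {𝒢 : (Fin n → α) → Prop}
    {σ : Equiv.Perm (Fin n)} : σ ∈ movers f 𝒢 ↔ 𝒢 (f ∘ ⇑σ⁻¹) := by simp [movers]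

namespace IsWreath

variable (hw : IsWreath φ star starW)
include hw

omit [PartialOrder Γ] in
lemma sElt_mul_yx_eq (f : Fin n → Fin r × ℕ) (σ : Equiv.Perm (Fin n)) :
    sElt φ σ * yx φ y l f = wm φ (fun i => y (l (f (σ⁻¹ i)).1)) 1 *
      pSum φ (movers f (· = f ∘ ⇑σ⁻¹)) := by
  rw [yx, ← mul_assoc, hw.sElt_mul_wm, mul_assoc]
  congr 1
  simp only [pSum, Finset.mul_sum, hw.sElt_mul]
  refine Finset.sum_bij' (fun τ _ => σ * τ) (fun τ _ => σ⁻¹ * τ) (fun τ hτ => ?_)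
    (fun τ hτ => ?_) (by simp) (by simp) (by simp)
  · rw [mem_movers]
    have := mem_stab.1 (inv_mem_stab hτ)
    funext i
    simpa using this (σ⁻¹ i)
  · rw [mem_movers] at hτ
    refine mem_stab.2 fun i => ?_
    have := congrFun hτ (τ i)
    simpa using this.symm

omit [PartialOrder Γ] in
lemma sElt_mul_yx_congr (f : Fin n → Fin r × ℕ) (σ τ : Equiv.Perm (Fin n))
    (h : f ∘ ⇑σ⁻¹ = f ∘ ⇑τ⁻¹) : sElt φ σ * yx φ y l f = sElt φ τ * yx φ y l f := by
  have h' : ∀ i, f (σ⁻¹ i) = f (τ⁻¹ i) := congrFun h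
  rw [hw.sElt_mul_yx_eq, hw.sElt_mul_yx_eq, h]
  simp only [h']

/-- The Garnir relation. -/
lemma wm_mul_pSum_garnir_mem {f g : Fin n → Fin r × ℕ} (hg : RowsAntitone g) (k : Fin r) (i : ℕ)
    (P : Finset (Fin n)) : ∀ Q : Finset (Fin n), P ⊆ rowSet g (k, i) ∪ rowSet g (k, i + 1) →
    Q ⊆ rowSet g (k, i) ∪ rowSet g (k, i + 1) → P.card + Q.card < (rowSet g (k, i + 1)).card →
    wm φ (fun i => y (l (g i).1)) 1 * pSum φ (movers f (Garnir g k i P Q)) ∈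
      domIdeal φ y l g := by
  induction P using Finset.induction_on with
  | empty =>
    intro Q _ hQ hcard
    have hS := hg.sDom_merge l k i Q hQ (by simpa using hcard)
    set ν : Fin n → Fin r × ℕ := fun m => if m ∈ Q then (k, i + 1) else
      if g m = (k, i) ∨ g m = (k, i + 1) then (k, i) else g m with hν
    have hU : ∀ m ∈ Q, g m = (k, i) ∨ g m = (k, i + 1) := fun m hm => by
      simpa [mem_rowSet] using hQ hm
    have hchar : ∀ g', Garnir g k i ∅ Q g' ↔
        (∀ m, ν m = (k, i) → g' m = (k, i) ∨ g' m = (k, i + 1)) ∧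
        ∀ m, ν m ≠ (k, i) → g' m = ν m := by
      intro g'
      constructor
      · rintro ⟨h1, h2, -, h4⟩
        refine ⟨fun m hm => ?_, fun m hm => ?_⟩
        · by_cases hmU : g m = (k, i) ∨ g m = (k, i + 1)
          · exact h2 m hmU
          · have : m ∉ Q := fun h => hmU (hU m h)
            simp only [hν, this, hmU, if_false] at hm
            exact absurd (Or.inl hm) hmU
        · by_cases hmQ : m ∈ Q
          · simp [hν, hmQ, h4 m hmQ]
          · by_cases hmU : g m = (k, i) ∨ g m = (k, i + 1)
            · simp [hν, hmQ, hmU] at hm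
            · rw [h1 m hmU]
              simp only [hν, hmQ, hmU, if_false]
      · rintro ⟨h1, h2⟩
        refine ⟨fun m hm => ?_, fun m hm => ?_, by simp, fun m hm => ?_⟩
        · have hmQ : m ∉ Q := fun h => hm (hU m h)
          have hνm : ν m = g m := by simp only [hν, hmQ, hm, if_false]
          rw [h2 m (by rw [hνm]; tauto), hνm]
        · by_cases hmQ : m ∈ Q
          · right
            have hνm : ν m = (k, i + 1) := by simp [hν, hmQ]
            rw [h2 m (by rw [hνm]; simp), hνm]
          · exact h1 m (by simp only [hν, hmQ, hm, if_false, if_true])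
        · have hνm : ν m = (k, i + 1) := by simp [hν, hm]
          rw [h2 m (by rw [hνm]; simp), hνm]
    obtain ⟨z, hz⟩ := hw.exists_pSum_eq ν (movers f (Garnir g k i ∅ Q)) (by
      intro σ hσ ω hω
      have hσ' := mem_stab.1 (inv_mem_stab hσ)
      rw [mem_movers, hchar] at *
      obtain ⟨h1, h2⟩ := hω
      refine ⟨fun m hm => ?_, fun m hm => ?_⟩
      · simpa using h1 (σ⁻¹ m) (by rw [hσ' m]; exact hm)
      · have := h2 (σ⁻¹ m) (by rw [hσ' m]; exact hm)
        rw [hσ' m] at this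
        simpa using this)
    have hfst : ∀ m, (g m).1 = (ν m).1 := by
      intro m
      simp only [hν]
      split_ifs with h1 h2
      · rcases hU m h1 with h | h <;> rw [h]
      · rcases h2 with h | h <;> rw [h]
      · rfl
    rw [hz, ← mul_assoc]
    have := mul_yx_mul_mem (φ := φ) (y := y) hS 1 z
    simpa only [hfst, one_mul, yx] using this
  | insert p P hp ih =>
    intro Q hP hQ hcard
    rw [Finset.card_insert_of_notMem hp] at hcard
    have hpU : g p = (k, i) ∨ g p = (k, i + 1) := by
      simpa [mem_rowSet] using hP (Finset.mem_insert_self _ _)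
    have hP' := (Finset.subset_insert p P).trans hP
    have h1 := ih Q hP' hQ (by omega)
    have h2 := ih (insert p Q) hP'
      (Finset.insert_subset (hP (Finset.mem_insert_self _ _)) hQ)
      (by have := Finset.card_insert_le p Q; omega)
    have h3 : pSum φ (movers f (Garnir g k i P Q)) =
        pSum φ (movers f (Garnir g k i (insert p P) Q)) +
        pSum φ (movers f (Garnir g k i P (insert p Q))) := by
      rw [pSum, pSum, pSum, ← Finset.sum_union]
      · refine Finset.sum_congr ?_ fun _ _ => rfl
        ext σ
        simp only [Finset.mem_union, mem_movers, Garnir, Finset.forall_mem_insert]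
        constructor
        · intro h
          rcases h.2.1 p hpU with h' | h'
          · exact Or.inl ⟨h.1, h.2.1, ⟨h', h.2.2.1⟩, h.2.2.2⟩
          · exact Or.inr ⟨h.1, h.2.1, h.2.2.1, h', h.2.2.2⟩
        · tauto
      · rw [Finset.disjoint_left]
        intro σ ha hb
        rw [mem_movers] at ha hb
        have ha' := ha.2.2.1 p (Finset.mem_insert_self _ _)
        have hb' := hb.2.2.2 p (Finset.mem_insert_self _ _)
        rw [ha'] at hb'
        simp at hb'
    rw [h3, mul_add] at h1
    simpa using sub_mem h1 h2

/-- Straightening of permutations against `y^α x_λ`. -/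
lemma sElt_mul_yx_mem {f : Fin n → Fin r × ℕ} (hf : RowsAntitone f) (σ : Equiv.Perm (Fin n)) :
    sElt φ σ * yx φ y l f ∈ Submodule.span R
      {x | ∃ τ : Equiv.Perm (Fin n), Ballot (f ∘ ⇑τ⁻¹) ∧ x = sElt φ τ * yx φ y l f} ⊔
      domIdeal φ y l f := by
  set S := Submodule.span R
      {x | ∃ τ : Equiv.Perm (Fin n), Ballot (f ∘ ⇑τ⁻¹) ∧ x = sElt φ τ * yx φ y l f} ⊔
      domIdeal φ y l f with hS
  have hbound : ∀ τ : Equiv.Perm (Fin n), ∑ m : Fin n, (m : ℕ) * (f (τ⁻¹ m)).2 ≤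
      n * ∑ m, (f m).2 := by
    intro τ
    calc _ ≤ ∑ m : Fin n, n * (f (τ⁻¹ m)).2 :=
          Finset.sum_le_sum fun m _ => Nat.mul_le_mul_right _ m.2.le
      _ = n * ∑ m, (f (τ⁻¹ m)).2 := (Finset.mul_sum _ _ _).symm
      _ = _ := by rw [Equiv.sum_comp (τ⁻¹ : Equiv.Perm (Fin n)) fun m => (f m).2]
  induction hd : n * ∑ m, (f m).2 - ∑ m : Fin n, (m : ℕ) * (f (σ⁻¹ m)).2 using
    Nat.strong_induction_on generalizing σ with
  | _ N ih =>
    by_cases hb : Ballot (f ∘ ⇑σ⁻¹)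
    · exact Submodule.mem_sup_left (Submodule.subset_span ⟨σ, hb, rfl⟩)
    · set g := f ∘ ⇑σ⁻¹ with hgdef
      simp only [Ballot, not_forall, not_le] at hb
      obtain ⟨k, i, θ, hlt⟩ := hb
      set P := (rowSet g (k, i)).filter (· ≤ θ) with hP
      set Q := (rowSet g (k, i + 1)).filter (fun m => ¬ m ≤ θ) with hQ
      have hga : RowsAntitone g := hf.comp σ⁻¹
      have hmem := hw.wm_mul_pSum_garnir_mem (y := y) (l := l) (f := f) hga k i P Q
        ((Finset.filter_subset _ _).trans Finset.subset_union_left)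
        ((Finset.filter_subset _ _).trans Finset.subset_union_right) (by
          have : ((rowSet g (k, i + 1)).filter (· ≤ θ)).card + Q.card =
              (rowSet g (k, i + 1)).card := by
            rw [hQ]
            convert Finset.card_filter_add_card_filter_not (s := rowSet g (k, i + 1))
              (fun m => m ≤ θ)
          omega)
      have hmem' : wm φ (fun i => y (l (g i).1)) 1 * pSum φ (movers f (Garnir g k i P Q)) ∈ S :=
        Submodule.mem_sup_right (domIdeal_mono (dom_comp l f σ⁻¹) hmem)
      have hsplit : wm φ (fun i => y (l (g i).1)) 1 * pSum φ (movers f (Garnir g k i P Q)) =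
          ∑ g' ∈ (Finset.univ.image fun τ : Equiv.Perm (Fin n) => f ∘ ⇑τ⁻¹).filter
            (Garnir g k i P Q), wm φ (fun i => y (l (g i).1)) 1 * pSum φ (movers f (· = g')) := by
        rw [← Finset.mul_sum]
        congr 1
        simp only [pSum]
        rw [← Finset.sum_fiberwise_of_maps_to (s := movers f (Garnir g k i P Q))
          (g := fun τ : Equiv.Perm (Fin n) => f ∘ ⇑τ⁻¹)]
        · refine Finset.sum_congr rfl fun g' hg' => Finset.sum_congr ?_ fun _ _ => rfl
          ext τ
          simp only [Finset.mem_filter, mem_movers] at hg' ⊢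
          exact ⟨fun h => h.2, fun h => ⟨h ▸ hg'.2, h⟩⟩
        · intro τ hτ
          rw [mem_movers] at hτ
          exact Finset.mem_filter.2 ⟨Finset.mem_image.2 ⟨τ, Finset.mem_univ _, rfl⟩, hτ⟩
      have hgmem : g ∈ (Finset.univ.image fun τ : Equiv.Perm (Fin n) => f ∘ ⇑τ⁻¹).filter
            (Garnir g k i P Q) := by
        refine Finset.mem_filter.2 ⟨Finset.mem_image.2 ⟨σ, Finset.mem_univ _, rfl⟩,
          fun _ _ => rfl, fun _ h => h, fun m hm => ?_, fun m hm => ?_⟩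
        · simpa [mem_rowSet] using (Finset.mem_filter.1 hm).1
        · simpa [mem_rowSet] using (Finset.mem_filter.1 hm).1
      rw [hsplit, ← Finset.add_sum_erase _ _ hgmem] at hmem'
      rw [hw.sElt_mul_yx_eq]
      refine (Submodule.add_mem_iff_left S (Submodule.sum_mem _ fun g' hg' => ?_)).1 hmem'
      simp only [Finset.mem_erase, Finset.mem_filter, Finset.mem_image, Finset.mem_univ,
        true_and] at hg'
      obtain ⟨hne, ⟨τ, rfl⟩, hgar⟩ := hg'
      have hsum : ∑ m, (f (τ⁻¹ m)).2 = ∑ m, (f (σ⁻¹ m)).2 := by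
        rw [Equiv.sum_comp (τ⁻¹ : Equiv.Perm (Fin n)) fun m => (f m).2,
          Equiv.sum_comp (σ⁻¹ : Equiv.Perm (Fin n)) fun m => (f m).2]
      have hlt' := hgar.weight_lt hsum hne
      have := ih _ (by
        have h1 := hbound τ
        simp only [hgdef, Function.comp_apply] at hlt'
        omega) τ rfl
      rw [hw.sElt_mul_yx_eq] at this
      have hfst := hgar.fst_eq
      simp only [Function.comp_apply] at hfst
      simpa only [hfst] using this

end IsWreath

end GarnirElements

/-! ### Tableaux and shapes -/

section Tableaux

variable {r n : ℕ} {lam : Fin r → YoungDiagram}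

/-- The cell of `lam` in component `k` and position `c`. -/
def MCells.mk (k : Fin r) (c : ℕ × ℕ) (h : c ∈ (lam k).cells) : MCells lam := ⟨k, ⟨c, h⟩⟩

lemma MCells.ext_iff' {x z : MCells lam} :
    x = z ↔ x.1 = z.1 ∧ (x.2 : ℕ × ℕ).1 = (z.2 : ℕ × ℕ).1 ∧ (x.2 : ℕ × ℕ).2 = (z.2 : ℕ × ℕ).2 := by
  refine ⟨by rintro rfl; simp, ?_⟩
  obtain ⟨k, ⟨c, hc⟩⟩ := x
  obtain ⟨k', ⟨c', hc'⟩⟩ := z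
  rintro ⟨h1, h2, h3⟩
  dsimp only at h1 h2 h3
  subst h1
  obtain rfl : c = c' := Prod.ext h2 h3
  rfl

lemma card_MCells : Fintype.card (MCells lam) = ∑ k, (lam k).card := by
  have : Fintype.card (MCells lam) =
      Fintype.card (Σ k : Fin r, {c : ℕ × ℕ // c ∈ (lam k).cells}) :=
    Fintype.card_congr (Equiv.refl _)
  rw [this, Fintype.card_sigma]
  simp [YoungDiagram.card]

/-- The component and row of every entry of a tableau. -/
def rowFn (S : MCells lam ≃ Fin n) : Fin n → Fin r × ℕ :=
  fun m => ((S.symm m).1, ((S.symm m).2 : ℕ × ℕ).1)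

lemma rowFn_apply (S : MCells lam ≃ Fin n) (x : MCells lam) :
    rowFn S (S x) = (x.1, (x.2 : ℕ × ℕ).1) := by
  unfold rowFn
  rw [Equiv.symm_apply_apply]

lemma rowFn_comp_dperm (tl S : MCells lam ≃ Fin n) :
    rowFn tl ∘ ⇑(dperm tl S)⁻¹ = rowFn S := by
  funext m
  change rowFn tl (tl (S.symm m)) = rowFn S m
  rw [rowFn_apply]
  rfl

lemma rowStab_eq_stab (tl : MCells lam ≃ Fin n) : rowStab tl = stab (rowFn tl) := by
  ext σ
  simp only [rowStab, Finset.mem_filter, Finset.mem_univ, true_and, mem_stab, rowFn, Prod.mk.injEq]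
  constructor
  · intro h i
    have := h (tl.symm i)
    rwa [Equiv.apply_symm_apply] at this
  · intro h x
    have := h (tl x)
    rwa [Equiv.symm_apply_apply] at this

lemma card_rowSet_rowFn (tl : MCells lam ≃ Fin n) (k : Fin r) (a : ℕ) :
    (rowSet (rowFn tl) (k, a)).card = (lam k).rowLen a := by
  rw [← Finset.card_range ((lam k).rowLen a)]
  refine Finset.card_bij (fun m _ => ((tl.symm m).2 : ℕ × ℕ).2) (fun m hm => ?_)
    (fun m hm m' hm' h => ?_) fun j hj => ?_
  · rw [mem_rowSet] at hm
    simp only [rowFn, Prod.mk.injEq] at hm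
    obtain ⟨rfl, rfl⟩ := hm
    rw [Finset.mem_range, ← YoungDiagram.mem_iff_lt_rowLen, ← YoungDiagram.mem_cells]
    exact (tl.symm m).2.2
  · rw [mem_rowSet] at hm hm'
    simp only [rowFn, Prod.mk.injEq] at hm hm'
    refine tl.symm.injective (MCells.ext_iff'.2 ⟨hm.1.trans hm'.1.symm, hm.2.trans hm'.2.symm, h⟩)
  · rw [Finset.mem_range, ← YoungDiagram.mem_iff_lt_rowLen, ← YoungDiagram.mem_cells] at hj
    refine ⟨tl (MCells.mk k (a, j) hj), ?_, ?_⟩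
    · rw [mem_rowSet, rowFn_apply]
      rfl
    · rw [Equiv.symm_apply_apply]
      rfl

lemma rowsAntitone_rowFn (tl : MCells lam ≃ Fin n) : RowsAntitone (rowFn tl) := fun k a b h => by
  simp only [card_rowSet_rowFn]
  exact (lam k).rowLen_anti _ _ h

/-- The number of earlier positions in the same row. -/
noncomputable def rowRank (g : Fin n → Fin r × ℕ) (m : Fin n) : ℕ :=
  ((rowSet g (g m)).filter (· < m)).card

lemma rowRank_lt_rowRank {g : Fin n → Fin r × ℕ} {m m' : Fin n} (h : g m = g m') (hlt : m < m') :
    rowRank g m < rowRank g m' := by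
  refine Finset.card_lt_card ⟨fun i hi => ?_, fun hs => ?_⟩
  · simp only [Finset.mem_filter, mem_rowSet] at *
    exact ⟨hi.1.trans h, hi.2.trans hlt⟩
  · have := hs (x := m) (by simp [mem_rowSet, h, hlt])
    simp at this

/-- A row function with the row sizes of `lam` comes from a tableau. -/
lemma exists_tableau (g : Fin n → Fin r × ℕ)
    (hg : ∀ k a, (rowSet g (k, a)).card = (lam k).rowLen a) (hn : ∑ k, (lam k).card = n) :
    ∃ S : MCells lam ≃ Fin n, rowFn S = g ∧
      ∀ m, ((S.symm m).2 : ℕ × ℕ).2 = rowRank g m := by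
  have hmem : ∀ m, ((g m).2, rowRank g m) ∈ (lam (g m).1).cells := by
    intro m
    rw [YoungDiagram.mem_cells, YoungDiagram.mem_iff_lt_rowLen, ← hg]
    refine Finset.card_lt_card ⟨Finset.filter_subset _ _, fun hs => ?_⟩
    have := hs (x := m) (by simp [mem_rowSet])
    simp at this
  set Ψ : Fin n → MCells lam := fun m => MCells.mk (g m).1 _ (hmem m) with hΨ
  have hinj : Function.Injective Ψ := by
    intro m m' h
    rw [MCells.ext_iff'] at h
    simp only [hΨ, MCells.mk] at h
    obtain ⟨h1, h2, h3⟩ := h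
    have hgm : g m = g m' := Prod.ext h1 h2
    rcases lt_trichotomy m m' with hlt | heq | hlt
    · exact absurd h3 (rowRank_lt_rowRank hgm hlt).ne
    · exact heq
    · exact absurd h3 (rowRank_lt_rowRank hgm.symm hlt).ne'
  have hbij : Function.Bijective Ψ := by
    rw [Fintype.bijective_iff_injective_and_card]
    exact ⟨hinj, by rw [card_MCells, hn, Fintype.card_fin]⟩
  refine ⟨(Equiv.ofBijective Ψ hbij).symm, ?_, fun m => ?_⟩
  · funext m
    rfl
  · rfl

lemma Ballot.card_le {g : Fin n → Fin r × ℕ} (hg : Ballot g) (k : Fin r) (θ : Fin n) {a b : ℕ}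
    (h : a ≤ b) : ((rowSet g (k, b)).filter (· ≤ θ)).card ≤
      ((rowSet g (k, a)).filter (· ≤ θ)).card := by
  induction b, h using Nat.le_induction with
  | base => exact le_rfl
  | succ b _ ih => exact (hg k b θ).trans ih

/-- Ballot row functions come from standard tableaux. -/
lemma Ballot.exists_isStdTableau {g : Fin n → Fin r × ℕ} (hb : Ballot g)
    (hg : ∀ k a, (rowSet g (k, a)).card = (lam k).rowLen a) (hn : ∑ k, (lam k).card = n) :
    ∃ S : MCells lam ≃ Fin n, rowFn S = g ∧ IsStdTableau S := by
  obtain ⟨S, rfl, hS⟩ := exists_tableau g hg hn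
  refine ⟨S, rfl, fun x z hk hrow hcol hne => ?_⟩
  by_contra hlt
  have hlt' : S z < S x := lt_of_le_of_ne (not_lt.1 hlt) fun h => hne (S.injective h).symm
  have h1 := hS (S x)
  have h2 := hS (S z)
  rw [Equiv.symm_apply_apply] at h1 h2
  have h3 := hb.card_le z.1 (S z) hrow
  have h4 : rowRank (rowFn S) (S z) <
      ((rowSet (rowFn S) (z.1, (z.2 : ℕ × ℕ).1)).filter (· ≤ S z)).card := by
    refine Finset.card_lt_card ⟨fun i hi => ?_, fun hs => ?_⟩
    · simp only [Finset.mem_filter, mem_rowSet] at *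
      exact ⟨hi.1.trans (rowFn_apply S z), hi.2.le⟩
    · have := hs (x := S z) (by simp [mem_rowSet, rowFn_apply])
      simp at this
  have h5 : ((rowSet (rowFn S) (z.1, (x.2 : ℕ × ℕ).1)).filter (· ≤ S z)).card ≤
      rowRank (rowFn S) (S x) := by
    refine Finset.card_le_card fun i hi => ?_
    simp only [Finset.mem_filter, mem_rowSet] at *
    refine ⟨hi.1.trans ?_, hi.2.trans_lt hlt'⟩
    rw [rowFn_apply]
    exact Prod.ext hk.symm rfl
  omega

end Tableaux

section Shapes

variable {Γ : Type*} [PartialOrder Γ] {r n : ℕ}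

lemma card_cntSet_rowFn_empty (l : Fin r → Γ) {lam : Fin r → YoungDiagram}
    (tl : MCells lam ≃ Fin n) (k : Fin r) :
    (cntSet l (rowFn tl) k ∅).card = ∑ k' ∈ Finset.univ.filter (fun k' => l k < l k'),
      (lam k').card := by
  rw [Finset.card_eq_sum_card_fiberwise (f := fun m => (tl.symm m).1)
    (t := Finset.univ.filter (fun k' => l k < l k'))]
  · refine Finset.sum_congr rfl fun k' hk' => ?_
    refine Finset.card_bij (fun m _ => ((tl.symm m).2 : ℕ × ℕ)) (fun m hm => ?_)
      (fun m hm m' hm' h => ?_) fun c hc => ?_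
    · simp only [Finset.mem_filter] at hm
      rw [← hm.2]
      exact (tl.symm m).2.2
    · simp only [Finset.mem_filter] at hm hm'
      exact tl.symm.injective (MCells.ext_iff'.2 ⟨hm.2.trans hm'.2.symm, by rw [h], by rw [h]⟩)
    · refine ⟨tl (MCells.mk k' c hc), ?_, ?_⟩
      · simp only [Finset.mem_filter, Finset.mem_univ, true_and] at hk'
        simp only [Finset.mem_filter, mem_cntSet, rowFn_apply, Equiv.symm_apply_apply]
        exact ⟨Or.inl hk', rfl⟩
      · rw [Equiv.symm_apply_apply]
        rfl
  · intro m hm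
    simpa [mem_cntSet, rowFn] using hm

lemma gDomL_iff_dom (l : Fin r → Γ) {mu lam : Fin r → YoungDiagram} (tm : MCells mu ≃ Fin n)
    (tl : MCells lam ≃ Fin n) : GDomL l mu lam ↔ Dom l (rowFn tm) (rowFn tl) := by
  have key : GDomL l mu lam ↔ ∀ k j, (cntSet l (rowFn tl) k (Finset.range j)).card ≤
      (cntSet l (rowFn tm) k (Finset.range j)).card := by
    simp only [card_cntSet l _ _ (Finset.range _), card_cntSet_rowFn_empty, card_rowSet_rowFn]
    rfl
  rw [key]
  constructor
  · intro h k J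
    exact ⟨Finset.range J.card, by simp,
      ((rowsAntitone_rowFn tl).card_cntSet_le l k J).trans (h k _)⟩
  · intro h k j
    obtain ⟨J', hJ', hle⟩ := h k (Finset.range j)
    refine hle.trans (((rowsAntitone_rowFn tm).card_cntSet_le l k J').trans
      (Finset.card_le_card (cntSet_subset_of_subset l _ k fun a ha => ?_)))
    simp only [Finset.mem_range, Finset.card_range] at *
    omega

lemma GDomL.antisymm {l : Fin r → Γ} {mu lam : Fin r → YoungDiagram} (h : GDomL l mu lam)
    (h' : GDomL l lam mu) : mu = lam := by
  have h1 : ∀ k j, ∑ i ∈ Finset.range j, (mu k).rowLen i = ∑ i ∈ Finset.range j,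
      (lam k).rowLen i := by
    intro k j
    have e1 := h k j
    have e2 := h' k j
    have e3 := h k 0
    have e4 := h' k 0
    simp only [Finset.range_zero, Finset.sum_empty, add_zero] at e3 e4
    omega
  funext k
  have h2 : ∀ a, (mu k).rowLen a = (lam k).rowLen a := by
    intro a
    have := h1 k (a + 1)
    rw [Finset.sum_range_succ, Finset.sum_range_succ, h1 k a] at this
    omega
  refine SetLike.ext fun c => ?_
  obtain ⟨a, j⟩ := c
  rw [YoungDiagram.mem_iff_lt_rowLen, YoungDiagram.mem_iff_lt_rowLen, h2]

lemma exists_perm_antitone (F : ℕ → ℕ) (N : ℕ) (hF : ∀ a, N ≤ a → F a = 0) :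
    ∃ e : Equiv.Perm ℕ, Antitone (F ∘ e) ∧ ∀ a, N ≤ a → F (e a) = 0 := by
  set s : Equiv.Perm (Fin N) := Tuple.sort fun i : Fin N => OrderDual.toDual (F i) with hs
  have hmono := Tuple.monotone_sort fun i : Fin N => OrderDual.toDual (F i)
  set e := s.extendDomain (Fin.equivSubtype (n := N)) with he
  have h1 : ∀ a (h : a < N), e a = s ⟨a, h⟩ := fun a h => by
    exact Equiv.Perm.extendDomain_apply_subtype s (Fin.equivSubtype (n := N)) (b := a) h
  have h2 : ∀ a, N ≤ a → e a = a := fun a h => by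
    exact Equiv.Perm.extendDomain_apply_not_subtype s (Fin.equivSubtype (n := N)) (b := a)
      (not_lt.2 h)
  refine ⟨e, fun a b hab => ?_, fun a h => by rw [h2 a h, hF a h]⟩
  by_cases hb : b < N
  · simp only [Function.comp_apply, h1 b hb, h1 a (hab.trans_lt hb)]
    exact hmono (a := ⟨a, hab.trans_lt hb⟩) (b := ⟨b, hb⟩) hab
  · simp [h2 b (not_lt.1 hb), hF b (not_lt.1 hb)]

/-- A row function with weakly decreasing rows has a shape. -/
lemma RowsAntitone.exists_shape {g : Fin n → Fin r × ℕ} (hg : RowsAntitone g) :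
    ∃ lam : MPar r n, ∀ k a, (rowSet g (k, a)).card = (lam.1 k).rowLen a := by
  set N := (Finset.univ.sup fun i => (g i).2) + 1 with hN
  have hNg : ∀ i, (g i).2 < N := fun i =>
    Nat.lt_succ_of_le (Finset.le_sup (f := fun i => (g i).2) (Finset.mem_univ i))
  have hzero : ∀ k a, N ≤ a → (rowSet g (k, a)).card = 0 := by
    intro k a ha
    rw [Finset.card_eq_zero, Finset.eq_empty_iff_forall_notMem]
    intro m hm
    rw [mem_rowSet] at hm
    have := hNg m
    rw [hm] at this
    dsimp only at this
    omega
  set lam : Fin r → YoungDiagram := fun k =>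
    { cells := (Finset.range N ×ˢ Finset.range (n + 1)).filter
        fun c => c.2 < (rowSet g (k, c.1)).card
      isLowerSet := by
        rintro ⟨a, j⟩ ⟨a', j'⟩ ⟨h1, h2⟩ hm
        simp only [Finset.coe_filter, Finset.mem_product, Finset.mem_range,
          Set.mem_ofPred_eq] at *
        have := hg k h1
        dsimp only at this
        omega } with hlam
  have hcells : ∀ k a j, (a, j) ∈ lam k ↔ j < (rowSet g (k, a)).card := by
    intro k a j
    rw [← YoungDiagram.mem_cells]
    simp only [hlam, Finset.mem_filter, Finset.mem_product, Finset.mem_range]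
    refine ⟨fun h => h.2, fun h => ⟨⟨?_, ?_⟩, h⟩⟩
    · by_contra ha
      rw [hzero k a (not_lt.1 ha)] at h
      omega
    · have := Finset.card_le_univ (rowSet g (k, a))
      rw [Fintype.card_fin] at this
      omega
  have hrow : ∀ k a, (rowSet g (k, a)).card = (lam k).rowLen a := by
    intro k a
    refine eq_of_forall_lt_iff fun j => ?_
    rw [← hcells, YoungDiagram.mem_iff_lt_rowLen]
  refine ⟨⟨lam, ?_⟩, hrow⟩
  have h1 : ∀ k, (lam k).card = ∑ a ∈ Finset.range N, (rowSet g (k, a)).card := by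
    intro k
    rw [YoungDiagram.card, Finset.card_eq_sum_card_fiberwise (f := Prod.fst)
      (t := Finset.range N)]
    · refine Finset.sum_congr rfl fun a _ => ?_
      rw [hrow, YoungDiagram.rowLen_eq_card]
      rfl
    · intro c hc
      simp only [hlam, Finset.coe_filter, Finset.mem_product, Set.mem_ofPred_eq] at hc
      simpa using hc.1.1
  simp only [h1]
  rw [← Finset.sum_product' (f := fun k a => (rowSet g (k, a)).card)]
  have h2 := Finset.card_eq_sum_card_fiberwise (f := g) (s := Finset.univ)
    (t := (Finset.univ : Finset (Fin r)) ×ˢ Finset.range N) (by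
      intro m _
      simpa using hNg m)
  rw [Finset.card_univ, Fintype.card_fin] at h2
  exact h2.symm

/-- Rows can be relabelled to become weakly decreasing. -/
lemma exists_rowsAntitone_reindex (l : Fin r → Γ) (f : Fin n → Fin r × ℕ) :
    ∃ g : Fin n → Fin r × ℕ, RowsAntitone g ∧ (∀ i, (f i).1 = (g i).1) ∧
      (∀ i j, f i = f j ↔ g i = g j) ∧ Dom l g f ∧ Dom l f g := by
  set N := (Finset.univ.sup fun i => (f i).2) + 1 with hN
  have hNf : ∀ i, (f i).2 < N := fun i =>
    Nat.lt_succ_of_le (Finset.le_sup (f := fun i => (f i).2) (Finset.mem_univ i))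
  choose e he _ using fun k => exists_perm_antitone (fun a => (rowSet f (k, a)).card) N (by
    intro a ha
    rw [Finset.card_eq_zero, Finset.eq_empty_iff_forall_notMem]
    intro m hm
    rw [mem_rowSet] at hm
    have := hNf m
    rw [hm] at this
    dsimp only at this
    omega)
  refine ⟨fun i => ((f i).1, (e (f i).1).symm (f i).2), fun k => ?_, fun _ => rfl,
    fun i j => ?_, fun k J => ⟨J.map (e k).symm.toEmbedding, by simp,
      Finset.card_le_card fun m => ?_⟩, fun k J => ⟨J.map (e k).toEmbedding, by simp,
      Finset.card_le_card fun m => ?_⟩⟩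
  · have : (fun a => (rowSet (fun i => ((f i).1, (e (f i).1).symm (f i).2)) (k, a)).card) =
        (fun a => (rowSet f (k, a)).card) ∘ e k := by
      funext a
      simp only [Function.comp_apply]
      congr 1
      ext m
      simp only [mem_rowSet, Prod.ext_iff]
      constructor
      · rintro ⟨h1, h2⟩
        subst h1
        exact ⟨rfl, by rw [← h2]; simp⟩
      · rintro ⟨h1, h2⟩
        subst h1
        exact ⟨rfl, by rw [h2]; simp⟩
    rw [this]
    exact he k
  · simp only [Prod.ext_iff]
    constructor
    · rintro ⟨h1, h2⟩
      exact ⟨h1, by rw [h1, h2]⟩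
    · rintro ⟨h1, h2⟩
      refine ⟨h1, ?_⟩
      rw [h1] at h2
      exact (e _).symm.injective h2
  · simp only [mem_cntSet]
    refine Or.imp_right fun h => ⟨h.1, ?_⟩
    rw [h.1]
    simpa using h.2
  · simp only [mem_cntSet]
    refine Or.imp_right fun h => ⟨h.1, ?_⟩
    have h2 := h.2
    rw [h.1] at h2
    exact Finset.mem_map.2 ⟨_, h2, by simp⟩

end Shapes

/-! ### Straightening onto standard tableaux -/

section StandardSpan

variable {R : Type*} [CommRing R] {A : Type*} [Ring A] [Algebra R A]
  {n : ℕ} {W : Type*} [Ring W] [Algebra R W]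
  {φ : ((⨂[R] _ : Fin n, A) ⊗[R] (Equiv.Perm (Fin n) →₀ R)) ≃ₗ[R] W}
  {Γ : Type*} [PartialOrder Γ] {T : Γ → Type*} {r : ℕ}
  {star : A →ₗ[R] A} {starW : W →ₗ[R] W} {y : Γ → A} {vv : ∀ γ, T γ → A} {l : Fin r → Γ}
  {lam : Fin r → YoungDiagram}

/-- The left factor `d(s) v` of a Murphy-type element. -/
noncomputable def leftElt
    (φ : ((⨂[R] _ : Fin n, A) ⊗[R] (Equiv.Perm (Fin n) →₀ R)) ≃ₗ[R] W)
    (vv : ∀ γ, T γ → A) (l : Fin r → Γ) (tl : MCells lam ≃ Fin n) (q : TabIdx T l n lam) : W :=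
  sElt φ (dperm tl q.1.1) * vElt φ vv l tl q.2

omit [PartialOrder Γ] in
lemma yaElt_mul_xlamElt (tl : MCells lam ≃ Fin n) :
    yaElt φ y l tl * xlamElt φ tl = yx φ y l (rowFn tl) := by
  rw [xlamElt, rowStab_eq_stab]
  rfl

namespace IsWreath

variable (hw : IsWreath φ star starW)
include hw

omit [PartialOrder Γ] in
lemma mwElt_eq (hmul : ∀ a b : A, star (a * b) = star b * star a) (tl : MCells lam ≃ Fin n)
    (q q' : TabIdx T l n lam) :
    mwElt φ starW y vv l tl q.1.1 q'.1.1 q.2 q'.2 =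
      leftElt φ vv l tl q * yx φ y l (rowFn tl) * starW (leftElt φ vv l tl q') := by
  rw [leftElt, leftElt, hw.starW_mul hmul, ← yaElt_mul_xlamElt, mwElt]
  simp only [mul_assoc]

lemma sElt_mul_yx_rowFn_mem (tl : MCells lam ≃ Fin n) (σ : Equiv.Perm (Fin n)) :
    sElt φ σ * yx φ y l (rowFn tl) ∈ Submodule.span R
      (Set.range fun S : {S : MCells lam ≃ Fin n // IsStdTableau S} =>
        sElt φ (dperm tl S.1) * yx φ y l (rowFn tl)) ⊔ domIdeal φ y l (rowFn tl) := by
  refine SetLike.le_def.1 (sup_le_sup (Submodule.span_mono ?_) le_rfl)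
    (hw.sElt_mul_yx_mem (rowsAntitone_rowFn tl) σ)
  rintro x ⟨τ, hτ, rfl⟩
  obtain ⟨S, hS, hstd⟩ := hτ.exists_isStdTableau (lam := lam) (fun k a => by
    rw [card_rowSet_comp, card_rowSet_rowFn]) (by
    rw [← card_MCells, Fintype.card_congr tl, Fintype.card_fin])
  refine ⟨⟨S, hstd⟩, hw.sElt_mul_yx_congr _ _ _ ?_⟩
  rw [rowFn_comp_dperm, hS]

lemma mul_yx_rowFn_mem (hc : CyclicCellular star y vv l) (tl : MCells lam ≃ Fin n) (a : W) :
    a * yx φ y l (rowFn tl) ∈ Submodule.span R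
      (Set.range fun q : TabIdx T l n lam => leftElt φ vv l tl q * yx φ y l (rowFn tl)) ⊔
      domIdeal φ y l (rowFn tl) := by
  set P := Submodule.span R
      (Set.range fun q : TabIdx T l n lam => leftElt φ vv l tl q * yx φ y l (rowFn tl)) ⊔
      domIdeal φ y l (rowFn tl) with hP
  have hJ : domIdeal φ y l (rowFn tl) ≤ P := le_sup_right
  have h1 : ∀ (S : {S : MCells lam ≃ Fin n // IsStdTableau S}) (b : Fin n → A),
      sElt φ (dperm tl S.1) * (wm φ b 1 * yx φ y l (rowFn tl)) ∈ P := by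
    intro S b
    have h := hw.wm_mul_yx_mem hc (rowFn tl) b
    have hle : Submodule.span R (Set.range fun τ : ∀ i, T (l (rowFn tl i).1) =>
        wm φ (fun i => vv _ (τ i)) 1 * yx φ y l (rowFn tl)) ⊔ domIdeal φ y l (rowFn tl) ≤
        P.comap (LinearMap.mulLeft R (sElt φ (dperm tl S.1))) := by
      refine sup_le (Submodule.span_le.2 ?_) fun x hx => hJ (mul_mem_domIdeal hx _)
      rintro _ ⟨τ, rfl⟩
      have h2 : ∃ τ' : ∀ x : MCells lam, T (l x.1), ∀ i, τ' (tl.symm i) = τ i :=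
        ⟨fun x => (congrArg (fun z : MCells lam => T (l z.1)) (tl.symm_apply_apply x)).mp
          (τ (tl x)), fun i => by
            refine eq_of_heq ((cast_heq _ _).trans ?_)
            rw [tl.apply_symm_apply]
            rfl⟩
      obtain ⟨τ', hτ'⟩ := h2
      have h3 : wm φ (fun i => vv (l (rowFn tl i).1) (τ i)) 1 = vElt φ vv l tl τ' := by
        rw [vElt]
        congr 1
        funext i
        rw [hτ']
        rfl
      refine Submodule.mem_sup_left (Submodule.subset_span ⟨(S, τ'), ?_⟩)
      simp only [leftElt, LinearMap.mulLeft_apply, h3, mul_assoc]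
    exact hle h
  have ha : a ∈ (⊤ : Submodule R W) := trivial
  rw [← span_wm (φ := φ)] at ha
  induction ha using Submodule.span_induction with
  | zero => simp
  | add x z _ _ hx hz => rw [add_mul]; exact add_mem hx hz
  | smul c x _ hx => rw [smul_mul_assoc]; exact Submodule.smul_mem _ _ hx
  | mem x hx =>
    obtain ⟨⟨b, σ⟩, rfl⟩ := hx
    dsimp only
    have h2 : wm φ b σ = wm φ b 1 * sElt φ σ := by rw [hw.wm_mul_sElt, one_mul]
    rw [h2, mul_assoc]
    have hle : Submodule.span R (Set.range fun S : {S : MCells lam ≃ Fin n // IsStdTableau S} =>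
        sElt φ (dperm tl S.1) * yx φ y l (rowFn tl)) ⊔ domIdeal φ y l (rowFn tl) ≤
        P.comap (LinearMap.mulLeft R (wm φ b 1)) := by
      refine sup_le (Submodule.span_le.2 ?_) fun x hx => hJ (mul_mem_domIdeal hx _)
      rintro _ ⟨S, rfl⟩
      have h3 := hw.sElt_mul_wm (dperm tl S.1) (fun i => b (dperm tl S.1 i))
      simp only [Equiv.Perm.coe_inv, Equiv.apply_symm_apply] at h3
      have := h1 S fun i => b (dperm tl S.1 i)
      rwa [← mul_assoc, h3, mul_assoc] at this
    exact hle (hw.sElt_mul_yx_rowFn_mem tl σ)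

lemma yx_rowFn_mul_mem (hc : CyclicCellular star y vv l) (tl : MCells lam ≃ Fin n) (b : W) :
    yx φ y l (rowFn tl) * b ∈ Submodule.span R
      (Set.range fun q : TabIdx T l n lam => yx φ y l (rowFn tl) * starW (leftElt φ vv l tl q)) ⊔
      domIdeal φ y l (rowFn tl) := by
  set P := Submodule.span R
      (Set.range fun q : TabIdx T l n lam => yx φ y l (rowFn tl) * starW (leftElt φ vv l tl q)) ⊔
      domIdeal φ y l (rowFn tl) with hP
  have hJ : domIdeal φ y l (rowFn tl) ≤ P := le_sup_right
  have key : ∀ c : W, starW (c * yx φ y l (rowFn tl)) - yx φ y l (rowFn tl) * starW c ∈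
      domIdeal φ y l (rowFn tl) := fun c => by
    rw [hw.starW_mul hc.star_mul, ← sub_mul]
    exact mem_mul_domIdeal (hw.starW_yx_sub_mem hc _) _
  have hle : Submodule.span R
      (Set.range fun q : TabIdx T l n lam => leftElt φ vv l tl q * yx φ y l (rowFn tl)) ⊔
      domIdeal φ y l (rowFn tl) ≤ P.comap starW := by
    refine sup_le (Submodule.span_le.2 ?_) fun x hx => hJ (hw.starW_mem_domIdeal hc hx)
    rintro _ ⟨q, rfl⟩
    have h1 : yx φ y l (rowFn tl) * starW (leftElt φ vv l tl q) ∈ P :=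
      Submodule.mem_sup_left (Submodule.subset_span ⟨q, rfl⟩)
    exact (Submodule.sub_mem_iff_left _ h1).1 (hJ (key (leftElt φ vv l tl q)))
  have h : starW (starW b * yx φ y l (rowFn tl)) ∈ P :=
    hle (hw.mul_yx_rowFn_mem hc tl (starW b))
  have h' := key (starW b)
  rw [hw.starW_starW hc.star_star] at h'
  exact (Submodule.sub_mem_iff_right _ h).1 (hJ h')

lemma mul_yx_rowFn_mul_mem (hc : CyclicCellular star y vv l) (tl : MCells lam ≃ Fin n)
    (a b : W) :
    a * yx φ y l (rowFn tl) * b ∈ Submodule.span R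
      (Set.range fun q : TabIdx T l n lam × TabIdx T l n lam =>
        leftElt φ vv l tl q.1 * yx φ y l (rowFn tl) * starW (leftElt φ vv l tl q.2)) ⊔
      domIdeal φ y l (rowFn tl) := by
  set P := Submodule.span R
      (Set.range fun q : TabIdx T l n lam × TabIdx T l n lam =>
        leftElt φ vv l tl q.1 * yx φ y l (rowFn tl) * starW (leftElt φ vv l tl q.2)) ⊔
      domIdeal φ y l (rowFn tl) with hP
  have hJ : domIdeal φ y l (rowFn tl) ≤ P := le_sup_right
  have h1 : Submodule.span R
      (Set.range fun q : TabIdx T l n lam => leftElt φ vv l tl q * yx φ y l (rowFn tl)) ⊔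
      domIdeal φ y l (rowFn tl) ≤ P.comap (LinearMap.mulRight R b) := by
    refine sup_le (Submodule.span_le.2 ?_) fun x hx => hJ (mem_mul_domIdeal hx _)
    rintro _ ⟨q, rfl⟩
    have h2 : Submodule.span R
        (Set.range fun q : TabIdx T l n lam =>
          yx φ y l (rowFn tl) * starW (leftElt φ vv l tl q)) ⊔
        domIdeal φ y l (rowFn tl) ≤ P.comap (LinearMap.mulLeft R (leftElt φ vv l tl q)) := by
      refine sup_le (Submodule.span_le.2 ?_) fun x hx => hJ (mul_mem_domIdeal hx _)
      rintro _ ⟨q', rfl⟩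
      refine Submodule.mem_sup_left (Submodule.subset_span ⟨(q, q'), ?_⟩)
      simp only [LinearMap.mulLeft_apply, mul_assoc]
    have h3 := h2 (hw.yx_rowFn_mul_mem hc tl b)
    simpa only [Submodule.comap_coe, Set.mem_preimage, SetLike.mem_coe, Submodule.mem_comap,
      LinearMap.mulLeft_apply, LinearMap.mulRight_apply, mul_assoc] using h3
  exact h1 (hw.mul_yx_rowFn_mem hc tl a)

end IsWreath

end StandardSpan

/-! ### Passing from row functions to multipartitions -/

section Multipartitions

variable {Γ : Type*} [PartialOrder Γ] {r n : ℕ}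

/-- The set of cells of a multipartition. -/
def cellSet (lam : Fin r → YoungDiagram) : Finset (MultiYoung.Box r) :=
  Finset.univ.sigma fun k => (lam k).cells

lemma mem_cellSet {lam : Fin r → YoungDiagram} {c : MultiYoung.Box r} :
    c ∈ cellSet lam ↔ c.2 ∈ (lam c.1).cells := by
  simp [cellSet]

lemma cellSet_injective : Function.Injective (cellSet (r := r)) := by
  intro lam mu h
  funext k
  refine YoungDiagram.ext (Finset.ext fun c => ?_)
  have := Finset.ext_iff.1 h ⟨k, c⟩
  rwa [mem_cellSet, mem_cellSet] at this

lemma isLowerSet_cellSet (lam : Fin r → YoungDiagram) :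
    IsLowerSet (cellSet lam : Set (MultiYoung.Box r)) := by
  rintro ⟨k, c⟩ ⟨k', c'⟩ h hc
  obtain ⟨h1, h2⟩ := MultiYoung.Box.le_iff.1 h
  dsimp only at h1 h2
  subst h1
  rw [Finset.mem_coe, mem_cellSet] at *
  exact (lam _).isLowerSet h2 hc

lemma cellSet_mem_lowers (lam : MPar r n) : cellSet lam.1 ∈ MultiYoung.lowers r n := by
  rw [MultiYoung.mem_lowers]
  refine ⟨?_, isLowerSet_cellSet _⟩
  rw [cellSet, Finset.card_sigma]
  exact lam.2

instance : Finite (MPar r n) :=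
  Finite.of_injective (fun lam : MPar r n =>
    (⟨cellSet lam.1, cellSet_mem_lowers lam⟩ : {s // s ∈ MultiYoung.lowers r n}))
    fun _ _ h => Subtype.ext (cellSet_injective (Subtype.ext_iff.1 h))

noncomputable instance : Fintype (MPar r n) := Fintype.ofFinite _

lemma GDomL.trans {l : Fin r → Γ} {nu mu lam : Fin r → YoungDiagram} (h : GDomL l nu mu)
    (h' : GDomL l mu lam) : GDomL l nu lam := fun k j => (h' k j).trans (h k j)

lemma wellFounded_strict_gDomL (l : Fin r → Γ) :
    WellFounded fun mu lam : MPar r n => GDomL l mu.1 lam.1 ∧ mu ≠ lam := by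
  have : IsTrans (MPar r n) fun mu lam => GDomL l mu.1 lam.1 ∧ mu ≠ lam :=
    ⟨fun _ _ _ h h' => ⟨h.1.trans h'.1, by
      rintro rfl
      exact h.2 (Subtype.ext (h.1.antisymm h'.1))⟩⟩
  have : Std.Irrefl fun mu lam : MPar r n => GDomL l mu.1 lam.1 ∧ mu ≠ lam :=
    ⟨fun _ h => h.2 rfl⟩
  exact Finite.wellFounded_of_trans_of_irrefl _

end Multipartitions

section MurphySpan

variable {R : Type*} [CommRing R] {A : Type*} [Ring A] [Algebra R A]
  {n : ℕ} {W : Type*} [Ring W] [Algebra R W]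
  {φ : ((⨂[R] _ : Fin n, A) ⊗[R] (Equiv.Perm (Fin n) →₀ R)) ≃ₗ[R] W}
  {Γ : Type*} [PartialOrder Γ] {T : Γ → Type*} {r : ℕ}
  {star : A →ₗ[R] A} {starW : W →ₗ[R] W} {y : Γ → A} {vv : ∀ γ, T γ → A} {l : Fin r → Γ}

/-- The family of Murphy-type elements. -/
noncomputable def murphy
    (φ : ((⨂[R] _ : Fin n, A) ⊗[R] (Equiv.Perm (Fin n) →₀ R)) ≃ₗ[R] W)
    (starW : W →ₗ[R] W) (y : Γ → A) (vv : ∀ γ, T γ → A) (l : Fin r → Γ)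
    (tls : ∀ lam : MPar r n, MCells lam.1 ≃ Fin n)
    (x : Σ lam : MPar r n, TabIdx T l n lam.1 × TabIdx T l n lam.1) : W :=
  leftElt φ vv l (tls x.1) x.2.1 * yx φ y l (rowFn (tls x.1)) *
    starW (leftElt φ vv l (tls x.1) x.2.2)

/-- The span of the members of a family indexed by pairs of tableaux whose shape strictly
dominates `lam`. -/
def strictSpan (l : Fin r → Γ)
    (F : (Σ lam : MPar r n, TabIdx T l n lam.1 × TabIdx T l n lam.1) → W) (lam : MPar r n) :
    Submodule R W :=
  Submodule.span R {x : W | ∃ mu : MPar r n, GDomL l mu.1 lam.1 ∧ mu ≠ lam ∧ ∃ z, x = F ⟨mu, z⟩}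

lemma strictSpan_mono (F : (Σ lam : MPar r n, TabIdx T l n lam.1 × TabIdx T l n lam.1) → W)
    {mu lam : MPar r n} (h : GDomL l mu.1 lam.1) :
    strictSpan (R := R) l F mu ≤ strictSpan l F lam := by
  refine Submodule.span_mono ?_
  rintro x ⟨nu, h1, h2, z, rfl⟩
  refine ⟨nu, h1.trans h, ?_, z, rfl⟩
  rintro rfl
  exact h2 (Subtype.ext (h1.antisymm h))

namespace IsWreath

variable (hw : IsWreath φ star starW)
include hw

/-- Every row function can be replaced by the row function of a tableau. -/
lemma exists_mul_yx_mul_eq (tls : ∀ lam : MPar r n, MCells lam.1 ≃ Fin n)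
    (f : Fin n → Fin r × ℕ) : ∃ (mu : MPar r n) (a b : W),
      yx φ y l f = a * yx φ y l (rowFn (tls mu)) * b ∧
      Dom l (rowFn (tls mu)) f ∧ Dom l f (rowFn (tls mu)) := by
  obtain ⟨g, hg, h1, h2, h3, h4⟩ := exists_rowsAntitone_reindex l f
  obtain ⟨mu, hmu⟩ := hg.exists_shape
  obtain ⟨S, hS, -⟩ := exists_tableau g hmu mu.2
  have hSg : g = rowFn (tls mu) ∘ ⇑(dperm (tls mu) S)⁻¹ := by rw [rowFn_comp_dperm, hS]
  refine ⟨mu, sElt φ (dperm (tls mu) S), sElt φ (dperm (tls mu) S)⁻¹, ?_, ?_, ?_⟩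
  · rw [hw.sElt_mul_yx, ← hSg, mul_assoc, hw.sElt_mul, mul_inv_cancel, hw.sElt_one, mul_one]
    exact yx_congr h1 h2
  · refine Dom.trans ?_ h3
    rw [hSg]
    exact dom_comp' _ _ _
  · refine h4.trans ?_
    rw [hSg]
    exact dom_comp _ _ _

lemma domIdeal_le_strictSpan (hc : CyclicCellular star y vv l)
    (tls : ∀ lam : MPar r n, MCells lam.1 ≃ Fin n) (lam : MPar r n) :
    domIdeal φ y l (rowFn (tls lam)) ≤ strictSpan l (murphy φ starW y vv l tls) lam := by
  induction lam using (wellFounded_strict_gDomL (n := n) l).induction with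
  | _ lam ih =>
    refine Submodule.span_le.2 ?_
    rintro _ ⟨g, a, b, hg, rfl⟩
    obtain ⟨mu, a', b', h1, h2, h3⟩ := hw.exists_mul_yx_mul_eq (φ := φ) (y := y) (l := l) tls g
    have hd : GDomL l mu.1 lam.1 := (gDomL_iff_dom l (tls mu) (tls lam)).2 (h2.trans hg.1)
    have hne : mu ≠ lam := by
      rintro rfl
      exact hg.2 h2
    have h4 : a * yx φ y l g * b = a * a' * yx φ y l (rowFn (tls mu)) * (b' * b) := by
      rw [h1]
      simp only [mul_assoc]
    rw [h4]
    refine SetLike.le_def.1 (sup_le (Submodule.span_le.2 ?_) ((ih mu ⟨hd, hne⟩).trans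
      (strictSpan_mono _ hd))) (hw.mul_yx_rowFn_mul_mem hc (tls mu) _ _)
    rintro _ ⟨q, rfl⟩
    exact Submodule.subset_span ⟨mu, hd, hne, q, rfl⟩

lemma mul_yx_mul_mem_span_murphy (hc : CyclicCellular star y vv l)
    (tls : ∀ lam : MPar r n, MCells lam.1 ≃ Fin n) (f : Fin n → Fin r × ℕ) (a b : W) :
    a * yx φ y l f * b ∈ Submodule.span R (Set.range (murphy φ starW y vv l tls)) := by
  obtain ⟨mu, a', b', h1, -, -⟩ := hw.exists_mul_yx_mul_eq (φ := φ) (y := y) (l := l) tls f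
  have h4 : a * yx φ y l f * b = a * a' * yx φ y l (rowFn (tls mu)) * (b' * b) := by
    rw [h1]
    simp only [mul_assoc]
  rw [h4]
  refine SetLike.le_def.1 (sup_le (Submodule.span_le.2 ?_)
    ((hw.domIdeal_le_strictSpan hc tls mu).trans (Submodule.span_le.2 ?_)))
    (hw.mul_yx_rowFn_mul_mem hc (tls mu) _ _)
  · rintro _ ⟨q, rfl⟩
    exact Submodule.subset_span ⟨⟨mu, q⟩, rfl⟩
  · rintro _ ⟨nu, -, -, z, rfl⟩
    exact Submodule.subset_span ⟨_, rfl⟩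

lemma span_murphy (hc : CyclicCellular star y vv l)
    (tls : ∀ lam : MPar r n, MCells lam.1 ≃ Fin n) :
    Submodule.span R (Set.range (murphy φ starW y vv l tls)) = ⊤ := by
  refine eq_top_iff.2 fun x _ => ?_
  have h := MultilinearMap.mem_of_forall_mem_span
    ((LinearMap.mulLeft R x).compMultilinearMap (wmM φ 1))
    (fun _ => {x | ∃ (k : Fin r) (u w : A), x = u * y (l k) * w})
    (Submodule.span R (Set.range (murphy φ starW y vv l tls))) (fun s hs => ?_)
    (fun _ => 1) (fun _ => hc.mem_span 1)
  · have h1 : wmM φ 1 (fun _ => (1 : A)) = 1 := hw.one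
    simpa [h1] using h
  · choose k u w hs using hs
    have h2 : yx φ y l (fun i : Fin n => (k i, (i : ℕ))) = wm φ (fun i => y (l (k i))) 1 := by
      have : stab (fun i : Fin n => (k i, (i : ℕ))) = {1} := by
        ext σ
        rw [mem_stab, Finset.mem_singleton]
        refine ⟨fun h => Equiv.ext fun i => Fin.ext (Prod.ext_iff.1 (h i)).2, ?_⟩
        rintro rfl i
        rfl
      rw [yx, this, pSum, Finset.sum_singleton, hw.sElt_one, mul_one]
    have h3 : wm φ s 1 = wm φ u 1 * yx φ y l (fun i : Fin n => (k i, (i : ℕ))) * wm φ w 1 := by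
      rw [h2, hw.wm_one_mul, hw.wm_one_mul]
      congr 1
      funext i
      exact hs i
    rw [LinearMap.compMultilinearMap_apply, LinearMap.mulLeft_apply, wmM_apply, h3, ← mul_assoc,
      ← mul_assoc]
    exact hw.mul_yx_mul_mem_span_murphy hc tls _ _ _

end IsWreath

end MurphySpan

/-! ### Counting and linear independence -/

section Counting

variable {Γ : Type*} {T : Γ → Type*} [∀ γ, Fintype (T γ)] {r n : ℕ}

/-- A cell of a multipartition as a box. -/
def MCells.toBox {lam : Fin r → YoungDiagram} (x : MCells lam) : MultiYoung.Box r :=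
  ⟨x.1, (x.2 : ℕ × ℕ)⟩

lemma MCells.toBox_injective {lam : Fin r → YoungDiagram} :
    Function.Injective (MCells.toBox (lam := lam)) := by
  rintro ⟨k, ⟨c, hc⟩⟩ ⟨k', ⟨c', hc'⟩⟩ h
  simp only [MCells.toBox, Sigma.mk.injEq, heq_eq_eq] at h
  obtain ⟨rfl, rfl⟩ := h
  rfl

lemma IsStdTableau.isExt {lam : Fin r → YoungDiagram} {S : MCells lam ≃ Fin n}
    (hS : IsStdTableau S) : MultiYoung.IsExt (cellSet lam) fun i => (S.symm i).toBox := by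
  refine ⟨MCells.toBox_injective.comp S.symm.injective, fun x => ?_, fun i j h => ?_⟩
  · rw [mem_cellSet]
    refine ⟨fun h => ⟨S (MCells.mk x.1 x.2 h), ?_⟩, ?_⟩
    · change (S.symm (S _)).toBox = x
      rw [Equiv.symm_apply_apply]
      rfl
    · rintro ⟨i, rfl⟩
      exact (S.symm i).2.2
  · obtain ⟨h1, h2, h3⟩ := MultiYoung.Box.le_iff.1 h
    by_cases hij : S.symm i = S.symm j
    · exact (S.symm.injective hij).le
    · have := hS _ _ h1 h2 h3 hij
      rw [Equiv.apply_symm_apply, Equiv.apply_symm_apply] at this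
      exact this.le

lemma card_isStdTableau_le (lam : Fin r → YoungDiagram) :
    Fintype.card {S : MCells lam ≃ Fin n // IsStdTableau S} ≤
      MultiYoung.numExt n (cellSet lam) := by
  have := MultiYoung.finite_isExt n (cellSet lam)
  rw [← Nat.card_eq_fintype_card]
  refine (Nat.card_le_card_of_injective (fun S : {S : MCells lam ≃ Fin n // IsStdTableau S} =>
    (⟨fun i => (S.1.symm i).toBox, S.2.isExt⟩ :
      {q : Fin n → MultiYoung.Box r // MultiYoung.IsExt (cellSet lam) q})) ?_).trans
    (MultiYoung.card_isExt_le n (isLowerSet_cellSet lam))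
  intro S S' h
  refine Subtype.ext (Equiv.symm_bijective.injective (Equiv.ext fun i => ?_))
  exact MCells.toBox_injective (congrFun (Subtype.ext_iff.1 h) i)

lemma prod_MCells (lam : Fin r → YoungDiagram) (τ : Fin r → ℕ) :
    ∏ x : MCells lam, τ x.1 = ∏ c ∈ cellSet lam, τ c.1 := by
  have h1 : ∏ x : MCells lam, τ x.1 =
      ∏ x : (Σ k : Fin r, {c : ℕ × ℕ // c ∈ (lam k).cells}), τ x.1 :=
    Fintype.prod_equiv (Equiv.refl _) _ _ fun _ => rfl
  rw [h1, Fintype.prod_sigma, cellSet, Finset.prod_sigma]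
  refine Finset.prod_congr rfl fun k _ => ?_
  simp

lemma card_tabIdx_le (l : Fin r → Γ) (lam : Fin r → YoungDiagram) :
    Fintype.card (TabIdx T l n lam) ≤ MultiYoung.numExt n (cellSet lam) *
      ∏ c ∈ cellSet lam, Fintype.card (T (l c.1)) := by
  have h : Fintype.card (TabIdx T l n lam) =
      Fintype.card ({S : MCells lam ≃ Fin n // IsStdTableau S} ×
        (∀ x : MCells lam, T (l x.1))) := Fintype.card_congr (Equiv.refl _)
  rw [h, Fintype.card_prod, Fintype.card_pi,
    prod_MCells lam fun k => Fintype.card (T (l k))]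
  exact Nat.mul_le_mul_right _ (card_isStdTableau_le lam)

lemma card_murphy_index_le (l : Fin r → Γ) :
    Fintype.card (Σ lam : MPar r n, TabIdx T l n lam.1 × TabIdx T l n lam.1) ≤
      (∑ k, Fintype.card (T (l k)) ^ 2) ^ n * n.factorial := by
  rw [Fintype.card_sigma, ← MultiYoung.sum_numExt_sq]
  have h : ∀ lam : MPar r n, Fintype.card (TabIdx T l n lam.1 × TabIdx T l n lam.1) ≤
      MultiYoung.numExt n (cellSet lam.1) ^ 2 *
        ∏ c ∈ cellSet lam.1, Fintype.card (T (l c.1)) ^ 2 := by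
    intro lam
    rw [Fintype.card_prod, Finset.prod_pow, ← mul_pow, ← sq]
    exact Nat.pow_le_pow_left (card_tabIdx_le l lam.1) 2
  refine (Finset.sum_le_sum fun lam _ => h lam).trans ?_
  rw [← Finset.sum_image (s := Finset.univ) (g := fun lam : MPar r n => cellSet lam.1)
    (f := fun s => MultiYoung.numExt n s ^ 2 * ∏ c ∈ s, Fintype.card (T (l c.1)) ^ 2)
    (fun _ _ _ _ h => Subtype.ext (cellSet_injective h))]
  refine Finset.sum_le_sum_of_subset fun s hs => ?_
  obtain ⟨lam, -, rfl⟩ := Finset.mem_image.1 hs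
  exact cellSet_mem_lowers lam

end Counting

section Independence

variable {R : Type*} [CommRing R] {A : Type*} [Ring A] [Algebra R A]
  {n : ℕ} {W : Type*} [Ring W] [Algebra R W]
  {Γ : Type*} [PartialOrder Γ] {T : Γ → Type*} [∀ γ, Fintype (T γ)] {r : ℕ}

lemma CellDatum.finrank_wreath [Nontrivial R] (D : CellDatum R A Γ T)
    (φ : ((⨂[R] _ : Fin n, A) ⊗[R] (Equiv.Perm (Fin n) →₀ R)) ≃ₗ[R] W)
    {l : Fin r → Γ} (hl : Function.Bijective l) :
    Module.finrank R W = (∑ k, Fintype.card (T (l k)) ^ 2) ^ n * n.factorial := by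
  set b : Module.Basis (Σ γ : Γ, T γ × T γ) R A := Module.Basis.mk D.indep D.span_top.ge
  set b' : Module.Basis (Σ k : Fin r, T (l k) × T (l k)) R A :=
    b.reindex (Equiv.sigmaCongrLeft (β := fun γ => T γ × T γ) (Equiv.ofBijective l hl)).symm
  have B := ((Basis.piTensorProduct fun _ : Fin n => b').tensorProduct
    (Finsupp.basisSingleOne (ι := Equiv.Perm (Fin n)) (R := R))).map φ
  rw [Module.finrank_eq_card_basis B, Fintype.card_prod, Fintype.card_perm, Fintype.card_fin]
  congr 1
  rw [Fintype.card_pi, Finset.prod_const, Finset.card_univ, Fintype.card_fin, Fintype.card_sigma]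
  simp [sq]

end Independence

/-- If `A` is a cyclic cellular algebra over an integral domain `R`, then
the wreath product `A ≀ 𝔖_n` is cyclic cellular, with poset the `Γ`-multipartitions of `n`
ordered by `Γ`-dominance, and cellular basis the Murphy-type elements
`m^λ_{(s,v),(t,w)} = d(s) v y^α x_λ w* d(t)*`: this family is an `R`-basis of `A ≀ 𝔖_n`,
satisfies the cellular multiplication and involution axioms relative to the order
`⊵_Γ`, and each cell module is cyclic. -/
theorem stmt_13 {R : Type*} [CommRing R] [IsDomain R] {A : Type*} [Ring A] [Algebra R A]
    {Γ : Type*} [PartialOrder Γ] {T : Γ → Type*} [∀ γ, Fintype (T γ)]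
    (D : CellDatum R A Γ T)
    (M : Γ → Type*) [∀ γ, AddCommGroup (M γ)] [∀ γ, Module R (M γ)]
    [∀ γ, Module A (M γ)] [∀ γ, IsScalarTower R A (M γ)]
    (e : ∀ γ, T γ → M γ) (hM : ∀ γ, IsCellModule D γ (M γ) (e γ))
    (δ : ∀ γ, M γ) (hδ : ∀ γ, Submodule.span A {δ γ} = ⊤)
    (p : ∀ γ, T γ → R) (hp : ∀ γ, ∑ s : T γ, p γ s • e γ s = δ γ)
    (y : Γ → A) (hymem : ∀ γ, y γ ∈ D.Aup γ)
    (hylift : ∀ γ,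
      y γ - ∑ s : T γ, ∑ t : T γ, (p γ s * p γ t) • D.c γ s t ∈ D.Abar γ)
    (vv : ∀ γ, T γ → A) (hvv : ∀ γ (t : T γ), vv γ t • δ γ = e γ t)
    {r : ℕ} (l : Fin r → Γ) (hl : Function.Bijective l)
    (hcomp : ∀ i j : Fin r, l j ≤ l i → i ≤ j)
    (n : ℕ)
    -- a choice of superstandard tableau `t^λ` for every multipartition `λ` of `n`
    (tls : ∀ lam : MPar r n, MCells lam.1 ≃ Fin n)
    (htls : ∀ lam : MPar r n, IsSuperstandard (tls lam))
    -- the wreath product `W = A ≀ 𝔖_n`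
    (W : Type*) [Ring W] [Algebra R W]
    (φ : ((⨂[R] _ : Fin n, A) ⊗[R] (Equiv.Perm (Fin n) →₀ R)) ≃ₗ[R] W)
    (hone : wm φ (fun _ => (1 : A)) 1 = 1)
    (hmul : ∀ (a b : Fin n → A) (π σ : Equiv.Perm (Fin n)),
      wm φ a π * wm φ b σ = wm φ (fun i => a i * b (π⁻¹ i)) (π * σ))
    (starW : W →ₗ[R] W)
    (hsw : ∀ (a : Fin n → A) (π : Equiv.Perm (Fin n)),
      starW (wm φ a π) = wm φ (fun i => D.star (a (π i))) π⁻¹) :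
    -- the Murphy-type basis of `A ≀ 𝔖_n`
    ∀ F : (Σ lam : MPar r n, TabIdx T l n lam.1 × TabIdx T l n lam.1) → W,
      (∀ (lam : MPar r n) (q q' : TabIdx T l n lam.1),
        F ⟨lam, (q, q')⟩ =
          mwElt φ starW y vv l (tls lam) q.1.1 q'.1.1 q.2 q'.2) →
      -- it is an `R`-basis
      (LinearIndependent R F ∧ Submodule.span R (Set.range F) = ⊤) ∧
      -- the cellular multiplication rule, modulo `N̄^λ`
      (∀ (lam : MPar r n) (q : TabIdx T l n lam.1) (a : W),
        ∃ coef : TabIdx T l n lam.1 → R, ∀ q' : TabIdx T l n lam.1,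
          a * F ⟨lam, (q, q')⟩ - ∑ u : TabIdx T l n lam.1, coef u • F ⟨lam, (u, q')⟩
            ∈ Submodule.span R {x : W | ∃ mu : MPar r n,
                GDomL l mu.1 lam.1 ∧ mu ≠ lam ∧ ∃ z, x = F ⟨mu, z⟩}) ∧
      -- the cellular involution rule
      (∀ (lam : MPar r n) (q q' : TabIdx T l n lam.1),
        starW (F ⟨lam, (q, q')⟩) - F ⟨lam, (q', q)⟩
          ∈ Submodule.span R {x : W | ∃ mu : MPar r n,
              GDomL l mu.1 lam.1 ∧ mu ≠ lam ∧ ∃ z, x = F ⟨mu, z⟩}) ∧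
      -- every cell module is cyclic
      (∀ (lam : MPar r n) (q0 : TabIdx T l n lam.1), ∃ z : W,
        z ∈ Submodule.span R (Set.range fun q : TabIdx T l n lam.1 => F ⟨lam, (q, q0)⟩)
            ⊔ Submodule.span R {x : W | ∃ mu : MPar r n,
                GDomL l mu.1 lam.1 ∧ mu ≠ lam ∧ ∃ z', x = F ⟨mu, z'⟩} ∧
        ∀ q : TabIdx T l n lam.1, ∃ a : W,
          a * z - F ⟨lam, (q, q0)⟩
            ∈ Submodule.span R {x : W | ∃ mu : MPar r n,
                GDomL l mu.1 lam.1 ∧ mu ≠ lam ∧ ∃ z', x = F ⟨mu, z'⟩}) := by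
  have hc : CyclicCellular D.star y vv l :=
    D.cyclicCellular M e hM p y hylift vv (fun γ t => by rw [hp, hvv]) l hl
  have hw : IsWreath φ D.star starW := ⟨hone, hmul, hsw⟩
  intro F hF
  obtain rfl : F = murphy φ starW y vv l tls := by
    funext x
    obtain ⟨lam, q, q'⟩ := x
    rw [hF, hw.mwElt_eq hc.star_mul]
    rfl
  have hJ := hw.domIdeal_le_strictSpan hc tls
  have hspan := hw.span_murphy hc tls
  refine ⟨⟨?_, hspan⟩, fun lam q a => ?_, fun lam q q' => ?_, fun lam q0 => ?_⟩
  · refine linearIndependent_of_top_le_span_of_card_le_finrank hspan.ge ?_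
    rw [D.finrank_wreath φ hl]
    exact card_murphy_index_le l
  · have h := hw.mul_yx_rowFn_mem hc (tls lam) (a * leftElt φ vv l (tls lam) q)
    obtain ⟨x, hx, z, hz, hxz⟩ := Submodule.mem_sup.1 h
    obtain ⟨coef, rfl⟩ := (Submodule.mem_span_range_iff_exists_fun R).1 hx
    refine ⟨coef, fun q' => hJ lam ?_⟩
    have h1 : a * murphy φ starW y vv l tls ⟨lam, (q, q')⟩ -
        ∑ u, coef u • murphy φ starW y vv l tls ⟨lam, (u, q')⟩ =
        z * starW (leftElt φ vv l (tls lam) q') := by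
      rw [eq_sub_of_add_eq' hxz, sub_mul, Finset.sum_mul]
      simp only [murphy, mul_assoc, smul_mul_assoc]
    rw [h1]
    exact mem_mul_domIdeal hz _
  · refine hJ lam ?_
    have h1 : starW (murphy φ starW y vv l tls ⟨lam, (q, q')⟩) -
        murphy φ starW y vv l tls ⟨lam, (q', q)⟩ =
        leftElt φ vv l (tls lam) q' * (starW (yx φ y l (rowFn (tls lam))) -
          yx φ y l (rowFn (tls lam))) * starW (leftElt φ vv l (tls lam) q) := by
      simp only [murphy, hw.starW_mul hc.star_mul, hw.starW_starW hc.star_star, mul_sub, sub_mul,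
        mul_assoc]
    rw [h1]
    exact mem_mul_domIdeal (mul_mem_domIdeal (hw.starW_yx_sub_mem hc _) _) _
  · refine ⟨yx φ y l (rowFn (tls lam)) * starW (leftElt φ vv l (tls lam) q0), ?_, fun q =>
      ⟨leftElt φ vv l (tls lam) q, ?_⟩⟩
    · have h := hw.mul_yx_rowFn_mem hc (tls lam) 1
      obtain ⟨x, hx, z, hz, hxz⟩ := Submodule.mem_sup.1 h
      obtain ⟨coef, rfl⟩ := (Submodule.mem_span_range_iff_exists_fun R).1 hx
      rw [one_mul] at hxz
      rw [← hxz, add_mul, Finset.sum_mul]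
      refine add_mem (Submodule.mem_sup_left (Submodule.sum_mem _ fun u _ => ?_))
        (Submodule.mem_sup_right (hJ lam (mem_mul_domIdeal hz _)))
      rw [smul_mul_assoc]
      exact Submodule.smul_mem _ _ (Submodule.subset_span ⟨u, rfl⟩)
    · have h1 : leftElt φ vv l (tls lam) q *
          (yx φ y l (rowFn (tls lam)) * starW (leftElt φ vv l (tls lam) q0)) -
          murphy φ starW y vv l tls ⟨lam, (q, q0)⟩ = 0 := by
        rw [murphy, mul_assoc, sub_self]
      rw [h1]
      exact zero_mem _
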